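/- arXiv:1305.4719 — 2 statements merged into one kernel-verified Lean document; each statement's English description precedes it below -/
import Mathlib

section
/- Key limit for the positive-exponential part (display (NdTp1)): lim_{t→0⁺} ∫₀^∞ ((e^{−t^{1/Y}·v} − 1)/t^{1/Y})·( P((Z + γ̃_t)⁺ + Ũ ≥ v) − C·(M^Y + (G+1)^Y)/(Y·v^Y) ) dv = −∫₀^∞ v·( P(Z⁺ + Ũ ≥ v) − C·M^Y/(Y·v^Y) − C·(G+1)^Y/(Y·v^Y) ) dv. -/
open MeasureTheory ProbabilityTheory Filter Topology Asymptotics Set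


lemma kerA_inner (x s : ℝ) (hs : 0 < s) :
    IntegrableOn (fun u : ℝ => (1 - Real.cos (u * x)) * (s * Real.exp (-(s * u)))) (Ioi 0) ∧
    ∫ u in Ioi (0:ℝ), (1 - Real.cos (u * x)) * (s * Real.exp (-(s * u))) = x^2 / (s^2 + x^2) := by
  have hre : (-(s:ℂ) + x * Complex.I).re < 0 := by simp [hs]
  have h1 := integrableOn_exp_mul_complex_Ioi hre 0
  have h2 := integral_exp_mul_complex_Ioi hre 0
  have h1r : IntegrableOn (fun u : ℝ => Real.exp (-s * u)) (Ioi 0) := by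
    exact integrableOn_exp_mul_Ioi (by linarith) 0
  have h2r := integral_exp_mul_Ioi (a := -s) (by linarith) 0
  have hcos : ∀ u : ℝ, (Complex.exp ((-(s:ℂ) + x * Complex.I) * u)).re
      = Real.exp (-s * u) * Real.cos (u * x) := by
    intro u
    rw [Complex.exp_re]
    simp [mul_comm]
  have h1' : IntegrableOn (fun u : ℝ => Real.exp (-s * u) * Real.cos (u * x)) (Ioi 0) := by
    have := h1.re
    refine (integrable_congr ?_).mp this
    exact Eventually.of_forall fun u => hcos u
  have h2' : ∫ u in Ioi (0:ℝ), Real.exp (-s * u) * Real.cos (u * x) = s / (s^2 + x^2) := by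
    have h3 := integral_re h1
    rw [h2] at h3
    have : ∀ u : ℝ, RCLike.re (Complex.exp ((-(s:ℂ) + x * Complex.I) * u))
      = Real.exp (-s * u) * Real.cos (u * x) := hcos
    simp_rw [this] at h3
    rw [h3]
    simp [Complex.neg_re, Complex.inv_re, Complex.normSq_apply, Complex.div_re]
    ring
  have hfun : (fun u : ℝ => (1 - Real.cos (u * x)) * (s * Real.exp (-(s * u))))
      = fun u => s * (Real.exp (-s * u) - Real.exp (-s * u) * Real.cos (u * x)) := by
    ext u; rw [neg_mul]; ring
  rw [hfun]
  refine ⟨(h1r.sub h1').const_mul s, ?_⟩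
  rw [integral_const_mul, integral_sub h1r h1', h2', h2r]
  simp
  have : s^2 + x^2 ≠ 0 := by positivity
  field_simp
  ring

lemma kerA_ss (u : ℝ) (hu : 0 < u) :
    ∫⁻ s in Ioi (0:ℝ), ENNReal.ofReal (s * Real.exp (-(s * u))) = ENNReal.ofReal (1 / u^2) := by
  have h := Real.integral_rpow_mul_exp_neg_mul_Ioi (a := 2) (r := u) (by norm_num) hu
  have hi : IntegrableOn (fun s : ℝ => s * Real.exp (-(s * u))) (Ioi 0) := by
    have := integrableOn_rpow_mul_exp_neg_mul_rpow (s := 1) (p := 1) (b := u) (by norm_num) (by norm_num) hu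
    refine this.congr_fun (fun s hs => ?_) measurableSet_Ioi
    simp [mul_comm]
  rw [← ofReal_integral_eq_lintegral_ofReal hi]
  · congr 1
    have h3 : Real.Gamma 2 = 1 := by simpa using Real.Gamma_nat_eq_factorial 1
    rw [h3] at h
    calc _ = ∫ t in Ioi 0, t ^ ((2:ℝ) - 1) * Real.exp (-(u * t)) := by
          refine setIntegral_congr_fun measurableSet_Ioi (fun s hs => ?_)
          norm_num [mul_comm]
      _ = _ := by rw [h]; norm_num
  · refine (ae_restrict_mem measurableSet_Ioi).mono fun s hs => ?_
    have : (0:ℝ) < s := hs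
    simp only [Pi.zero_apply]; positivity

lemma kerA_outer (x : ℝ) :
    ∫⁻ s in Ioi (0:ℝ), ENNReal.ofReal (x^2 / (s^2 + x^2)) = ENNReal.ofReal (Real.pi / 2 * |x|) := by
  rcases eq_or_ne x 0 with rfl | hx
  · simp
  have hx' : 0 < |x| := abs_pos.mpr hx
  have h := integral_comp_mul_left_Ioi (fun s : ℝ => (1 + s^2)⁻¹) 0 (inv_pos.mpr hx')
  have hi : IntegrableOn (fun s : ℝ => (1 + (|x|⁻¹ * s)^2)⁻¹) (Ioi 0) := by
    have := (integrable_inv_one_add_sq.integrableOn : IntegrableOn (fun s : ℝ => (1 + s^2)⁻¹) (Ioi (|x|⁻¹ * 0)))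
    exact (integrableOn_Ioi_comp_mul_left_iff (fun s : ℝ => (1 + s^2)⁻¹) 0 (inv_pos.mpr hx')).mpr this
  have he : ∀ s : ℝ, x^2 / (s^2 + x^2) = (1 + (|x|⁻¹ * s)^2)⁻¹ := by
    intro s
    rw [mul_pow, inv_pow, sq_abs]
    have : s^2 + x^2 ≠ 0 := by positivity
    field_simp
    ring
  simp_rw [he]
  rw [← ofReal_integral_eq_lintegral_ofReal hi (Eventually.of_forall fun s => by simp only [Pi.zero_apply]; positivity), h]
  congr 1
  simp
  ring

lemma kerA (x : ℝ) :
    ∫⁻ u in Ioi (0:ℝ), ENNReal.ofReal ((1 - Real.cos (u * x)) / u^2) = ENNReal.ofReal (Real.pi / 2 * |x|) := by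
  rw [← kerA_outer]
  calc _ = ∫⁻ u in Ioi (0:ℝ), ∫⁻ s in Ioi (0:ℝ),
        ENNReal.ofReal ((1 - Real.cos (u * x)) * (s * Real.exp (-(s * u)))) := by
        refine setLIntegral_congr_fun measurableSet_Ioi (fun u hu => ?_)
        have h0 : 0 ≤ 1 - Real.cos (u * x) := by linarith [Real.cos_le_one (u * x)]
        simp_rw [ENNReal.ofReal_mul h0]
        rw [lintegral_const_mul _ (by fun_prop), kerA_ss u hu, ← ENNReal.ofReal_mul h0]
        congr 1; ring
    _ = ∫⁻ s in Ioi (0:ℝ), ∫⁻ u in Ioi (0:ℝ),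
        ENNReal.ofReal ((1 - Real.cos (u * x)) * (s * Real.exp (-(s * u)))) := by
        apply lintegral_lintegral_swap
        apply Measurable.aemeasurable
        fun_prop
    _ = _ := by
        refine setLIntegral_congr_fun measurableSet_Ioi (fun s hs => ?_)
        obtain ⟨h1, h2⟩ := kerA_inner x s hs
        rw [← h2, ofReal_integral_eq_lintegral_ofReal h1]
        refine (ae_restrict_mem measurableSet_Ioi).mono fun u hu => ?_
        have : (0:ℝ) < s := hs
        have h0 : 0 ≤ 1 - Real.cos (u * x) := by linarith [Real.cos_le_one (u * x)]
        simp only [Pi.zero_apply]; positivity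


lemma norm_exp_sub_one_le_of_re_nonpos (w : ℂ) (hw : w.re ≤ 0) : ‖1 - Complex.exp w‖ ≤ 2 * ‖w‖ := by
  rcases le_or_gt ‖w‖ 1 with h | h
  · rw [norm_sub_rev]; exact Complex.norm_exp_sub_one_le h
  · have : ‖Complex.exp w‖ ≤ 1 := by
      rw [Complex.norm_exp]; exact Real.exp_le_one_iff.mpr hw
    have := norm_sub_le 1 (Complex.exp w)
    simp only [norm_one] at this
    linarith

lemma norm_one_sub_exp_le_two (w : ℂ) (hw : w.re ≤ 0) : ‖1 - Complex.exp w‖ ≤ 2 := by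
  have : ‖Complex.exp w‖ ≤ 1 := by
    rw [Complex.norm_exp]; exact Real.exp_le_one_iff.mpr hw
  have := norm_sub_le 1 (Complex.exp w)
  simp only [norm_one] at this
  linarith

lemma norm_exp_second (w : ℂ) (hw : w.re ≤ 0) : ‖1 - Complex.exp w + w‖ ≤ 3 * ‖w‖^2 := by
  rcases le_or_gt ‖w‖ 1 with h | h
  · have := Complex.norm_exp_sub_one_sub_id_le h
    rw [← norm_neg, show -(1 - Complex.exp w + w) = Complex.exp w - 1 - w by ring]
    nlinarith [sq_nonneg ‖w‖]
  · have h1 := norm_one_sub_exp_le_two w hw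
    have := norm_add_le (1 - Complex.exp w) w
    nlinarith

/-- integrability of the dominating function -/
lemma dom_integrable (Y : ℝ) (hY : 1 < Y) (f : ℝ → ℂ) (hf : Measurable f) (K : ℝ)
    (h1 : ∀ u, 0 < u → ‖f u‖ ≤ K * u ^ Y) (h2 : ∀ u, 0 < u → ‖f u‖ ≤ 2) :
    IntegrableOn (fun u : ℝ => f u / u^2) (Ioi 0) := by
  have hm : Measurable (fun u : ℝ => f u / (u:ℂ)^2) := by fun_prop
  rw [← Ioc_union_Ioi_eq_Ioi (zero_le_one' ℝ)]
  refine IntegrableOn.union ?_ ?_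
  · have hi : IntegrableOn (fun u : ℝ => K * u ^ (Y - 2)) (Ioc 0 1) := by
      have := (intervalIntegral.intervalIntegrable_rpow' (a := 0) (b := 1) (r := Y - 2) (by linarith))
      rw [intervalIntegrable_iff_integrableOn_Ioc_of_le zero_le_one] at this
      exact this.const_mul K
    refine Integrable.mono' hi hm.aestronglyMeasurable ?_
    refine (ae_restrict_mem measurableSet_Ioc).mono fun u hu => ?_
    have hu0 : 0 < u := hu.1
    rw [norm_div, norm_pow, Complex.norm_real, Real.norm_of_nonneg hu0.le, Real.rpow_sub hu0,
      Real.rpow_two, ← mul_div_assoc]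
    gcongr
    exact h1 u hu0
  · have hi : IntegrableOn (fun u : ℝ => 2 * u ^ (-2 : ℝ)) (Ioi 1) := by
      exact (integrableOn_Ioi_rpow_of_lt (by norm_num) zero_lt_one).const_mul 2
    refine Integrable.mono' hi hm.aestronglyMeasurable ?_
    refine (ae_restrict_mem measurableSet_Ioi).mono fun u hu => ?_
    have hu0 : 0 < u := lt_trans zero_lt_one hu
    rw [norm_div, norm_pow, Complex.norm_real, Real.norm_of_nonneg hu0.le, Real.rpow_neg hu0.le,
      Real.rpow_two, ← div_eq_mul_inv]
    gcongr
    exact h2 u hu0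

lemma integrand_integrable (Y : ℝ) (hY : 1 < Y) (B : ℂ) (hB : B.re ≤ 0) (a : ℝ) :
    IntegrableOn (fun u : ℝ => Complex.exp (-(Complex.I * u * a)) *
      (1 - Complex.exp (B * ((u ^ Y : ℝ) : ℂ))) / (u:ℂ)^2) (Ioi 0) := by
  have hn : ∀ u : ℝ, ‖Complex.exp (-(Complex.I * u * a))‖ = 1 := by
    intro u
    rw [Complex.norm_exp]; simp
  have hre : ∀ u : ℝ, 0 < u → (B * ((u ^ Y : ℝ) : ℂ)).re ≤ 0 := by
    intro u hu
    rw [Complex.re_mul_ofReal]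
    exact mul_nonpos_of_nonpos_of_nonneg hB (by positivity)
  refine dom_integrable Y hY _ (by fun_prop) (2 * ‖B‖) ?_ ?_
  · intro u hu
    rw [norm_mul, hn, one_mul]
    refine (norm_exp_sub_one_le_of_re_nonpos _ (hre u hu)).trans ?_
    rw [norm_mul, Complex.norm_real, Real.norm_of_nonneg (by positivity), mul_assoc]
  · intro u hu
    rw [norm_mul, hn, one_mul]
    exact norm_one_sub_exp_le_two _ (hre u hu)

lemma ker_integrable (a : ℝ) : IntegrableOn (fun u : ℝ => (1 - Real.cos (u * a)) / u^2) (Ioi 0) ∧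
    ∫ u in Ioi (0:ℝ), (1 - Real.cos (u * a)) / u^2 = Real.pi / 2 * |a| := by
  have hnn : ∀ u : ℝ, 0 ≤ (1 - Real.cos (u * a)) / u^2 := fun u =>
    div_nonneg (by linarith [Real.cos_le_one (u * a)]) (sq_nonneg u)
  have hm : Measurable (fun u : ℝ => (1 - Real.cos (u * a)) / u^2) := by fun_prop
  refine ⟨⟨hm.aestronglyMeasurable, ?_⟩, ?_⟩
  · rw [hasFiniteIntegral_iff_ofReal (Eventually.of_forall hnn), kerA]
    exact ENNReal.ofReal_lt_top
  · rw [integral_eq_lintegral_of_nonneg_ae (Eventually.of_forall hnn) hm.aestronglyMeasurable, kerA,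
      ENNReal.toReal_ofReal (by positivity)]

lemma abs_moment {Ω : Type} [MeasurableSpace Ω] (P : Measure Ω) [IsProbabilityMeasure P]
    (Y : ℝ) (hY : 1 < Y) (B : ℂ) (hB : B.re ≤ 0) (U : Ω → ℝ) (hU : Measurable U)
    (hchar : ∀ u : ℝ, 0 < u → (∫ ω, Complex.exp (Complex.I * u * (U ω)) ∂P) =
      Complex.exp (B * ((u ^ Y : ℝ) : ℂ))) (a : ℝ) :
    Integrable (fun ω => |U ω - a|) P ∧
    Real.pi / 2 * (∫ ω, |U ω - a| ∂P) = Real.pi / 2 * |a| + (∫ u in Ioi (0:ℝ),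
      Complex.exp (-(Complex.I * u * a)) *
      (1 - Complex.exp (B * ((u ^ Y : ℝ) : ℂ))) / (u:ℂ)^2).re := by
  have hI := integrand_integrable Y hY B hB a
  obtain ⟨hK1, hK2⟩ := ker_integrable a
  set F : ℝ → ℂ := fun u => Complex.exp (-(Complex.I * u * a)) *
      (1 - Complex.exp (B * ((u ^ Y : ℝ) : ℂ))) / (u:ℂ)^2 with hF
  -- cos integrals
  have hcos : ∀ u : ℝ, 0 < u → ∫ ω, Real.cos (u * (U ω - a)) ∂P =
      (Complex.exp (-(Complex.I * u * a)) * Complex.exp (B * ((u ^ Y : ℝ) : ℂ))).re := by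
    intro u hu
    rw [← hchar u hu, ← integral_const_mul]
    have hintg : Integrable (fun ω => Complex.exp (-(Complex.I * u * a)) * Complex.exp (Complex.I * u * (U ω))) P := by
      refine Integrable.of_bound (C := 1) (by fun_prop) (Eventually.of_forall fun ω => ?_)
      rw [← Complex.exp_add, Complex.norm_exp]
      simp
    have := integral_re hintg
    refine Eq.trans ?_ this
    congr 1
    ext ω
    rw [← Complex.exp_add]
    change _ = (Complex.exp _).re
    rw [Complex.exp_re]
    simp
    congr 1
    ring
  have hsplit : ∀ u : ℝ, 0 < u → ∫ ω, (1 - Real.cos (u * (U ω - a))) / u^2 ∂P =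
      (1 - Real.cos (u * a)) / u^2 + (F u).re := by
    intro u hu
    rw [integral_div, integral_sub (integrable_const _), hcos u hu]
    · simp only [hF]
      rw [show (u:ℂ)^2 = ((u^2 : ℝ):ℂ) by push_cast; ring, Complex.div_ofReal_re, mul_sub, mul_one, Complex.sub_re,
        Complex.exp_re (-(Complex.I * u * a))]
      simp
      ring
    · refine Integrable.of_bound (C := 1) (by fun_prop) (Eventually.of_forall fun ω => ?_)
      exact Real.abs_cos_le_one _
  have hFre : IntegrableOn (fun u => (F u).re) (Ioi 0) := hI.re
  have hnn : ∀ u x: ℝ, 0 ≤ (1 - Real.cos (u * x)) / u^2 := fun u x =>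
    div_nonneg (by linarith [Real.cos_le_one (u * x)]) (sq_nonneg u)
  have hsum : IntegrableOn (fun u => (1 - Real.cos (u * a)) / u^2 + (F u).re) (Ioi 0) := hK1.add hFre
  have hL : ∫⁻ ω, ENNReal.ofReal (Real.pi / 2 * |U ω - a|) ∂P =
      ENNReal.ofReal (∫ u in Ioi (0:ℝ), ((1 - Real.cos (u * a)) / u^2 + (F u).re)) := by
    rw [ofReal_integral_eq_lintegral_ofReal hsum]
    · simp_rw [← kerA]
      rw [lintegral_lintegral_swap]
      · refine setLIntegral_congr_fun measurableSet_Ioi (fun u hu => ?_)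
        rw [← hsplit u hu, ofReal_integral_eq_lintegral_ofReal]
        · refine Integrable.of_bound (C := 2 / u^2) (by fun_prop) (Eventually.of_forall fun ω => ?_)
          rw [Real.norm_of_nonneg (hnn _ _)]
          gcongr
          linarith [Real.neg_one_le_cos (u * (U ω - a))]
        · exact Eventually.of_forall fun ω => hnn _ _
      · apply Measurable.aemeasurable
        fun_prop
    · refine (ae_restrict_mem measurableSet_Ioi).mono fun u hu => ?_
      simp only [Pi.zero_apply]
      rw [← hsplit u hu]
      exact integral_nonneg fun ω => hnn _ _
  have hintg : Integrable (fun ω => Real.pi / 2 * |U ω - a|) P := by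
    refine ⟨by fun_prop, ?_⟩
    rw [hasFiniteIntegral_iff_ofReal (Eventually.of_forall fun ω => by simp only [Pi.zero_apply]; positivity), hL]
    exact ENNReal.ofReal_lt_top
  have hpi : Real.pi / 2 ≠ 0 := by positivity
  refine ⟨?_, ?_⟩
  · have := hintg.const_mul (Real.pi/2)⁻¹
    refine this.congr (Eventually.of_forall fun ω => ?_)
    simp only []
    rw [inv_mul_cancel_left₀ hpi]
  · rw [← integral_const_mul, integral_eq_lintegral_of_nonneg_ae (Eventually.of_forall fun ω => by simp only [Pi.zero_apply]; positivity)
      hintg.1, hL, ENNReal.toReal_ofReal, integral_add hK1 hFre, hK2]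
    · congr 1
      exact integral_re hI
    · refine setIntegral_nonneg measurableSet_Ioi fun u hu => ?_
      rw [← hsplit u hu]
      exact integral_nonneg fun ω => hnn _ _


lemma strip_shift (f : ℂ → ℂ) (hf : Differentiable ℂ f) (θ₀ θ₁ : ℝ) (g : ℝ → ℝ)
    (hg : Integrable g) (hg1 : Tendsto g atTop (𝓝 0)) (hg2 : Tendsto g atBot (𝓝 0))
    (hb : ∀ s τ : ℝ, τ ∈ uIcc θ₀ θ₁ → ‖f (s + τ * Complex.I)‖ ≤ g s) :
    ∫ s : ℝ, f (s + θ₀ * Complex.I) = ∫ s : ℝ, f (s + θ₁ * Complex.I) := by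
  have hcont : ∀ τ : ℝ, Continuous fun s : ℝ => f (s + τ * Complex.I) := fun τ =>
    hf.continuous.comp (by fun_prop)
  have hintg : ∀ τ : ℝ, τ ∈ uIcc θ₀ θ₁ → Integrable fun s : ℝ => f (s + τ * Complex.I) := fun τ hτ =>
    hg.mono' (hcont τ).aestronglyMeasurable (Eventually.of_forall fun s => hb s τ hτ)
  have hlim : ∀ τ : ℝ, τ ∈ uIcc θ₀ θ₁ → Tendsto (fun T : ℝ => ∫ s in (-T)..T, f (s + τ * Complex.I)) atTop
      (𝓝 (∫ s : ℝ, f (s + τ * Complex.I))) := fun τ hτ =>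
    intervalIntegral_tendsto_integral (hintg τ hτ) tendsto_neg_atTop_atBot tendsto_id
  have hv1 : Tendsto (fun T : ℝ => ∫ y in θ₀..θ₁, f (T + y * Complex.I)) atTop (𝓝 0) := by
    refine squeeze_zero_norm (a := fun T => g T * |θ₁ - θ₀|) (fun T => ?_) (by simpa using hg1.mul_const _)
    exact intervalIntegral.norm_integral_le_of_norm_le_const fun y hy => hb T y (uIoc_subset_uIcc hy)
  have hv2 : Tendsto (fun T : ℝ => ∫ y in θ₀..θ₁, f ((-T : ℝ) + y * Complex.I)) atTop (𝓝 0) := by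
    refine squeeze_zero_norm (a := fun T => g (-T) * |θ₁ - θ₀|) (fun T => ?_) ?_
    · exact intervalIntegral.norm_integral_le_of_norm_le_const fun y hy => hb (-T) y (uIoc_subset_uIcc hy)
    · simpa using (hg2.comp tendsto_neg_atTop_atBot).mul_const |θ₁ - θ₀|
  have hrect : ∀ T : ℝ, (∫ s in (-T)..T, f (s + θ₀ * Complex.I)) - (∫ s in (-T)..T, f (s + θ₁ * Complex.I)) +
      Complex.I • (∫ y in θ₀..θ₁, f (T + y * Complex.I)) -
      Complex.I • (∫ y in θ₀..θ₁, f ((-T : ℝ) + y * Complex.I)) = 0 := by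
    intro T
    have := Complex.integral_boundary_rect_eq_zero_of_differentiableOn f ⟨-T, θ₀⟩ ⟨T, θ₁⟩ hf.differentiableOn
    simpa using this
  have h := (((hlim θ₀ left_mem_uIcc).sub (hlim θ₁ right_mem_uIcc)).add (hv1.const_smul Complex.I)).sub
    (hv2.const_smul Complex.I)
  simp_rw [hrect] at h
  have := tendsto_nhds_unique h tendsto_const_nhds
  simp at this
  exact sub_eq_zero.mp this

lemma cov_exp (g : ℝ → ℂ) : ∫ r in Ioi (0:ℝ), g r = ∫ s : ℝ, (Real.exp s : ℂ) * g (Real.exp s) := by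
  have := integral_image_eq_integral_abs_deriv_smul (s := univ) (f := Real.exp) (f' := Real.exp) MeasurableSet.univ
    (fun x _ => (Real.hasDerivAt_exp x).hasDerivWithinAt) (Real.exp_injective.injOn) g
  rw [image_univ, Real.range_exp] at this
  rw [this]
  simp

lemma cov_exp_integrable (g : ℝ → ℝ) (hg : IntegrableOn g (Ioi 0)) :
    Integrable (fun s : ℝ => Real.exp s * g (Real.exp s)) := by
  have := integrableOn_image_iff_integrableOn_abs_deriv_smul (s := univ) (f := Real.exp) (f' := Real.exp) MeasurableSet.univ
    (fun x _ => (Real.hasDerivAt_exp x).hasDerivWithinAt) (Real.exp_injective.injOn) g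
  rw [image_univ, Real.range_exp] at this
  simpa using this.mp hg

lemma cov_exp_real (g : ℝ → ℝ) : ∫ r in Ioi (0:ℝ), g r = ∫ s : ℝ, Real.exp s * g (Real.exp s) := by
  have := integral_image_eq_integral_abs_deriv_smul (s := univ) (f := Real.exp) (f' := Real.exp) MeasurableSet.univ
    (fun x _ => (Real.hasDerivAt_exp x).hasDerivWithinAt) (Real.exp_injective.injOn) g
  rw [image_univ, Real.range_exp] at this
  rw [this]
  simp

lemma exp_neg_abs_integrable (c : ℝ) (hc : 0 < c) : Integrable (fun s : ℝ => Real.exp (-(c * |s|))) := by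
  rw [← integrableOn_univ, ← Iic_union_Ioi (a := (0:ℝ))]
  refine IntegrableOn.union ?_ ?_
  · refine (integrableOn_exp_mul_Iic hc 0).congr_fun (fun s hs => ?_) measurableSet_Iic
    simp only []
    rw [abs_of_nonpos hs, mul_neg, neg_neg]
  · refine (integrableOn_exp_mul_Ioi (a := -c) (by linarith) 0).congr_fun (fun s hs => ?_) measurableSet_Ioi
    simp only []
    rw [abs_of_pos hs, neg_mul]

/-- double-exponential weights -/
lemma dexp (p k : ℝ) (hp : 0 < p) (hk : 0 < k) :
    Integrable (fun s : ℝ => Real.exp (p * s) * Real.exp (-(k * Real.exp s))) ∧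
    ∫ s : ℝ, Real.exp (p * s) * Real.exp (-(k * Real.exp s)) = (1 / k) ^ p * Real.Gamma p := by
  have he : ∀ s : ℝ, Real.exp s * ((Real.exp s) ^ (p - 1) * Real.exp (-(k * Real.exp s))) =
      Real.exp (p * s) * Real.exp (-(k * Real.exp s)) := by
    intro s
    rw [← mul_assoc, ← Real.exp_mul, ← Real.exp_add]
    ring_nf
  constructor
  · have hi : IntegrableOn (fun r : ℝ => r ^ (p - 1) * Real.exp (-(k * r))) (Ioi 0) := by
      have := integrableOn_rpow_mul_exp_neg_mul_rpow (s := p - 1) (p := 1) (b := k) (by linarith) (by norm_num) hk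
      refine this.congr_fun (fun s hs => ?_) measurableSet_Ioi
      simp
    have := cov_exp_integrable _ hi
    simpa only [he] using this
  · rw [← Real.integral_rpow_mul_exp_neg_mul_Ioi hp hk, cov_exp_real]
    simp only [he]

lemma dexp_tendsto (p k : ℝ) (hp : 0 < p) (hk : 0 < k) :
    Tendsto (fun s : ℝ => Real.exp (p * s) * Real.exp (-(k * Real.exp s))) atTop (𝓝 0) ∧
    Tendsto (fun s : ℝ => Real.exp (p * s) * Real.exp (-(k * Real.exp s))) atBot (𝓝 0) := by
  constructor
  · have h := tendsto_rpow_mul_exp_neg_mul_atTop_nhds_zero p k hk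
    have := h.comp Real.tendsto_exp_atTop
    refine this.congr fun s => ?_
    simp only [Function.comp, ← Real.exp_mul]
    ring_nf
  · have h1 : Tendsto (fun s : ℝ => Real.exp (p * s)) atBot (𝓝 0) :=
      Real.tendsto_exp_atBot.comp (tendsto_id.const_mul_atBot hp)
    refine squeeze_zero (fun s => by positivity) (fun s => ?_) h1
    refine mul_le_of_le_one_right (by positivity) ?_
    rw [Real.exp_le_one_iff]
    have := Real.exp_pos s
    nlinarith [mul_pos hk this]

lemma re_osc (a s τ : ℝ) : (-(Complex.I * Complex.exp (s + τ * Complex.I) * a)).re = a * Real.exp s * Real.sin τ := by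
  rw [Complex.neg_re, Complex.re_mul_ofReal, Complex.I_mul_re, Complex.exp_im]
  simp
  ring

lemma re_B (Y : ℝ) (B : ℂ) (s τ : ℝ) : (B * Complex.exp (Y * (s + τ * Complex.I))).re =
    Real.exp (Y * s) * (B * Complex.exp ((Y * τ : ℝ) * Complex.I)).re := by
  rw [show (Y:ℂ) * (s + τ * Complex.I) = ((Y * s : ℝ) : ℂ) + ((Y * τ : ℝ) : ℂ) * Complex.I by push_cast; ring,
    Complex.exp_add, ← Complex.ofReal_exp, mul_left_comm, Complex.re_ofReal_mul]

lemma norm_w (Y : ℝ) (B : ℂ) (s τ : ℝ) : ‖B * Complex.exp (Y * (s + τ * Complex.I))‖ = ‖B‖ * Real.exp (Y * s) := by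
  rw [norm_mul, Complex.norm_exp]
  simp

lemma norm_negexp (s τ : ℝ) : ‖Complex.exp (-(s + τ * Complex.I))‖ = Real.exp (-s) := by
  rw [Complex.norm_exp]
  simp

/-- shift of the full integral -/
lemma J_shift (Y : ℝ) (hY : 1 < Y) (B : ℂ)
    (hB : ∀ τ ∈ Icc (-(Real.pi/4)) 0, (B * Complex.exp ((Y * τ : ℝ) * Complex.I)).re ≤ 0) (a : ℝ) (ha : 0 ≤ a) :
    ∫ u in Ioi (0:ℝ), Complex.exp (-(Complex.I * u * a)) *
      (1 - Complex.exp (B * ((u ^ Y : ℝ) : ℂ))) / (u:ℂ)^2 =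
    ∫ s : ℝ, (fun z : ℂ => Complex.exp (-(Complex.I * Complex.exp z * a)) * (1 - Complex.exp (B * Complex.exp (Y * z)))
      * Complex.exp (-z)) (s + ((-(Real.pi/4) : ℝ) : ℂ) * Complex.I) := by
  have hmem : ∀ τ, τ ∈ uIcc (0:ℝ) (-(Real.pi/4)) → τ ∈ Icc (-(Real.pi/4)) 0 := by
    intro τ hτ
    rwa [uIcc_of_ge (by linarith [Real.pi_pos])] at hτ
  refine Eq.trans ?_ (strip_shift (fun z : ℂ => Complex.exp (-(Complex.I * Complex.exp z * a)) *
    (1 - Complex.exp (B * Complex.exp (Y * z))) * Complex.exp (-z)) (by fun_prop) 0 (-(Real.pi/4))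
    (fun s => 2 * (max ‖B‖ 1) * Real.exp (-(min 1 (Y-1) * |s|))) ?_ ?_ ?_ ?_)
  · rw [cov_exp]
    congr 1
    ext s
    have h1 : ((Real.exp s : ℝ) ^ Y : ℝ) = Real.exp (Y * s) := by rw [← Real.exp_mul, mul_comm]
    rw [h1]
    push_cast
    simp only [zero_mul, add_zero]
    rw [Complex.exp_neg (s:ℂ)]
    have := Complex.exp_ne_zero s
    field_simp
  · have := exp_neg_abs_integrable (min 1 (Y-1)) (by simp [hY])
    exact this.const_mul _
  · have h1 : Tendsto (fun s : ℝ => Real.exp (-(min 1 (Y-1) * |s|))) atTop (𝓝 0) := by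
      refine Real.tendsto_exp_neg_atTop_nhds_zero.comp ?_
      exact tendsto_abs_atTop_atTop.const_mul_atTop (by simp [hY])
    simpa using h1.const_mul (2 * (max ‖B‖ 1))
  · have h1 : Tendsto (fun s : ℝ => Real.exp (-(min 1 (Y-1) * |s|))) atBot (𝓝 0) := by
      refine Real.tendsto_exp_neg_atTop_nhds_zero.comp ?_
      exact tendsto_abs_atBot_atTop.const_mul_atTop (by simp [hY])
    simpa using h1.const_mul (2 * (max ‖B‖ 1))
  · intro s τ hτ
    have hτ' := hmem τ hτ
    have hre : (B * Complex.exp (Y * (s + τ * Complex.I))).re ≤ 0 := by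
      rw [re_B]
      exact mul_nonpos_of_nonneg_of_nonpos (by positivity) (hB τ hτ')
    have hosc : ‖Complex.exp (-(Complex.I * Complex.exp (s + τ * Complex.I) * a))‖ ≤ 1 := by
      rw [Complex.norm_exp, re_osc, Real.exp_le_one_iff]
      refine mul_nonpos_of_nonneg_of_nonpos (by positivity) ?_
      exact Real.sin_nonpos_of_nonpos_of_neg_pi_le hτ'.2 (by linarith [hτ'.1, Real.pi_pos])
    rw [norm_mul, norm_mul, norm_negexp]
    have hmin : 0 ≤ min 1 (Y-1) := by simp [hY.le]
    calc _ ≤ 1 * ‖1 - Complex.exp (B * Complex.exp (Y * (s + τ * Complex.I)))‖ * Real.exp (-s) := by gcongr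
      _ ≤ _ := by
        rw [one_mul]
        rcases le_total 0 s with hs | hs
        · have := norm_one_sub_exp_le_two _ hre
          rw [abs_of_nonneg hs]
          have h2 : (1:ℝ) ≤ max ‖B‖ 1 := le_max_right _ _
          calc _ ≤ 2 * Real.exp (-s) := by gcongr
            _ ≤ 2 * 1 * Real.exp (-(min 1 (Y-1) * s)) := by
              rw [mul_one]
              gcongr
              exact mul_le_of_le_one_left hs (min_le_left _ _)
            _ ≤ _ := by gcongr
        · have := norm_exp_sub_one_le_of_re_nonpos _ hre
          rw [norm_w] at this
          rw [abs_of_nonpos hs]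
          calc _ ≤ 2 * (‖B‖ * Real.exp (Y * s)) * Real.exp (-s) := by gcongr
            _ = 2 * ‖B‖ * Real.exp ((Y - 1) * s) := by
              rw [show (Y-1) * s = Y * s + -s by ring, Real.exp_add]; ring
            _ ≤ 2 * (max ‖B‖ 1) * Real.exp (-(min 1 (Y-1) * -s)) := by
              gcongr
              · exact le_max_left _ _
              · rw [mul_neg, neg_neg]
                exact mul_le_mul_of_nonpos_right (min_le_right _ _) hs

lemma sin_neg_pi_div_four_le {τ : ℝ} (h1 : -(Real.pi/2) ≤ τ) (h2 : τ ≤ -(Real.pi/4)) :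
    Real.sin τ ≤ -(1/2) := by
  have : Real.sin τ ≤ Real.sin (-(Real.pi/6)) := by
    apply Real.sin_le_sin_of_le_of_le_pi_div_two <;> linarith [Real.pi_pos]
  rw [Real.sin_neg, Real.sin_pi_div_six] at this
  exact this

lemma main_shift (Y : ℝ) (hY : 1 < Y) (a : ℝ) (ha : 0 < a) :
    Integrable (fun s : ℝ => (fun z : ℂ => Complex.exp (-(Complex.I * Complex.exp z * a)) * Complex.exp ((Y-1) * z))
       (s + ((-(Real.pi/4) : ℝ) : ℂ) * Complex.I)) ∧
    ∫ s : ℝ, (fun z : ℂ => Complex.exp (-(Complex.I * Complex.exp z * a)) * Complex.exp ((Y-1) * z))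
       (s + ((-(Real.pi/4) : ℝ) : ℂ) * Complex.I) =
     Complex.exp ((-(Real.pi/2 * (Y-1)) : ℝ) * Complex.I) * (((1/a)^(Y-1) * Real.Gamma (Y-1) : ℝ) : ℂ) := by
  have hmem : ∀ τ, τ ∈ uIcc (-(Real.pi/4)) (-(Real.pi/2)) → τ ∈ Icc (-(Real.pi/2)) (-(Real.pi/4)) := by
    intro τ hτ
    rwa [uIcc_of_ge (by linarith [Real.pi_pos])] at hτ
  have hbd : ∀ s τ : ℝ, τ ∈ uIcc (-(Real.pi/4)) (-(Real.pi/2)) →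
    ‖(fun z : ℂ => Complex.exp (-(Complex.I * Complex.exp z * a)) * Complex.exp ((Y-1) * z))
       (s + (τ : ℂ) * Complex.I)‖ ≤ Real.exp ((Y-1) * s) * Real.exp (-(a/2 * Real.exp s)) := by
    intro s τ hτ
    have hτ' := hmem τ hτ
    simp only []
    rw [norm_mul, Complex.norm_exp, re_osc, Complex.norm_exp, mul_comm]
    have h3 : (((Y:ℂ)-1) * (s + τ * Complex.I)).re = (Y-1) * s := by simp
    rw [h3]
    gcongr
    have := sin_neg_pi_div_four_le hτ'.1 hτ'.2
    nlinarith [mul_pos ha (Real.exp_pos s)]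
  have hd := dexp (Y-1) (a/2) (by linarith) (by linarith)
  have hd2 := dexp_tendsto (Y-1) (a/2) (by linarith) (by linarith)
  refine ⟨?_, ?_⟩
  · refine hd.1.mono' ?_ (Eventually.of_forall fun s => hbd s _ left_mem_uIcc)
    apply Continuous.aestronglyMeasurable
    fun_prop
  · refine (strip_shift (fun z : ℂ => Complex.exp (-(Complex.I * Complex.exp z * a)) * Complex.exp ((Y-1) * z))
      (by fun_prop) (-(Real.pi/4)) (-(Real.pi/2)) _ hd.1 hd2.1 hd2.2 hbd).trans ?_
    rw [← (dexp (Y-1) a (by linarith) ha).2, ← integral_complex_ofReal, ← integral_const_mul]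
    congr 1
    ext s
    have h1 : Complex.exp (s + ((-(Real.pi/2) : ℝ) : ℂ) * Complex.I) = -(Complex.I * Complex.exp s) := by
      rw [Complex.exp_add, Complex.ofReal_neg, neg_mul, Complex.exp_neg]
      push_cast
      rw [Complex.exp_pi_div_two_mul_I, Complex.inv_I]
      ring
    rw [h1]
    have h2 : ((Y:ℂ)-1) * (s + ((-(Real.pi/2) : ℝ) : ℂ) * Complex.I) = ((-(Real.pi/2 * (Y-1)) : ℝ):ℂ) * Complex.I + ((Y-1)*s : ℝ) := by
      push_cast; ring
    rw [h2, Complex.exp_add]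
    have h3 : -(Complex.I * -(Complex.I * Complex.exp s) * (a:ℂ)) = ((-(a * Real.exp s) : ℝ) : ℂ) := by
      push_cast
      linear_combination (Complex.exp s * a) * Complex.I_sq
    rw [h3]
    push_cast
    ring


/-- The oscillatory integral. -/
noncomputable def stJ (Y : ℝ) (B : ℂ) (a : ℝ) : ℂ :=
  ∫ u in Ioi (0:ℝ), Complex.exp (-(Complex.I * u * a)) *
      (1 - Complex.exp (B * ((u ^ Y : ℝ) : ℂ))) / (u:ℂ)^2

/-- Remainder integrand on the rotated line. -/
noncomputable def stR (Y : ℝ) (B : ℂ) (a : ℝ) (z : ℂ) : ℂ :=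
  Complex.exp (-(Complex.I * Complex.exp z * a)) *
    (1 - Complex.exp (B * Complex.exp (Y * z)) + B * Complex.exp (Y * z)) * Complex.exp (-z)

lemma stR_cont (Y : ℝ) (B : ℂ) (a τ : ℝ) : Continuous (fun s : ℝ => stR Y B a (s + (τ : ℂ) * Complex.I)) := by
  unfold stR; fun_prop

lemma stR_factor (Y : ℝ) (B : ℂ)
    (hB : ∀ τ ∈ Icc (-(Real.pi/4)) 0, (B * Complex.exp ((Y * τ : ℝ) * Complex.I)).re ≤ 0) (s : ℝ) :
    ‖(1 - Complex.exp (B * Complex.exp (Y * (s + ((-(Real.pi/4) : ℝ) : ℂ) * Complex.I)))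
      + B * Complex.exp (Y * (s + ((-(Real.pi/4) : ℝ) : ℂ) * Complex.I))) * Complex.exp (-(s + ((-(Real.pi/4) : ℝ) : ℂ) * Complex.I))‖
      ≤ 3 * ‖B‖^2 * Real.exp ((2 * Y - 1) * s) := by
  have hre : (B * Complex.exp (Y * (s + ((-(Real.pi/4) : ℝ) : ℂ) * Complex.I))).re ≤ 0 := by
    rw [re_B]
    exact mul_nonpos_of_nonneg_of_nonpos (by positivity) (hB _ ⟨le_rfl, by linarith [Real.pi_pos]⟩)
  have h := norm_exp_second _ hre
  rw [norm_w] at h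
  rw [norm_mul, norm_negexp]
  calc _ ≤ 3 * (‖B‖ * Real.exp (Y * s))^2 * Real.exp (-s) := by gcongr
    _ = _ := by
      rw [show (2 * Y - 1) * s = Y * s + Y * s + -s by ring, Real.exp_add, Real.exp_add]; ring

lemma osc_bound (a s : ℝ) (ha : 0 ≤ a) :
    ‖Complex.exp (-(Complex.I * Complex.exp (s + ((-(Real.pi/4) : ℝ) : ℂ) * Complex.I) * a))‖ ≤ Real.exp (-(a/2 * Real.exp s)) := by
  rw [Complex.norm_exp, re_osc]
  gcongr
  have := sin_neg_pi_div_four_le (τ := -(Real.pi/4)) (by linarith [Real.pi_pos]) le_rfl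
  nlinarith [mul_nonneg ha (Real.exp_pos s).le]

lemma osc_diff_bound (a s : ℝ) (ha : 0 ≤ a) :
    ‖Complex.exp (-(Complex.I * Complex.exp (s + ((-(Real.pi/4) : ℝ) : ℂ) * Complex.I) * a))
      - Complex.exp (-(Complex.I * Complex.exp (s + ((-(Real.pi/4) : ℝ) : ℂ) * Complex.I) * ((a + 1 : ℝ) : ℂ)))‖
       ≤ Real.exp (-(a/2 * Real.exp s)) * (2 * Real.exp s) := by
  have h1 : Complex.exp (-(Complex.I * Complex.exp (s + ((-(Real.pi/4) : ℝ) : ℂ) * Complex.I) * ((a + 1 : ℝ) : ℂ)))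
     = Complex.exp (-(Complex.I * Complex.exp (s + ((-(Real.pi/4) : ℝ) : ℂ) * Complex.I) * a)) *
      Complex.exp (-(Complex.I * Complex.exp (s + ((-(Real.pi/4) : ℝ) : ℂ) * Complex.I) * (1:ℝ))) := by
    rw [← Complex.exp_add]; congr 1; push_cast; ring
  rw [h1, ← mul_one_sub, norm_mul]
  have h2 : (-(Complex.I * Complex.exp (s + ((-(Real.pi/4) : ℝ) : ℂ) * Complex.I) * (1:ℝ))).re ≤ 0 := by
    rw [re_osc]
    have := sin_neg_pi_div_four_le (τ := -(Real.pi/4)) (by linarith [Real.pi_pos]) le_rfl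
    nlinarith [Real.exp_pos s]
  have h3 := norm_exp_sub_one_le_of_re_nonpos _ h2
  have h4 : ‖-(Complex.I * Complex.exp (s + ((-(Real.pi/4) : ℝ) : ℂ) * Complex.I) * (1:ℝ))‖ = Real.exp s := by
    rw [norm_neg, norm_mul, norm_mul, Complex.norm_exp]
    simp
  rw [h4] at h3
  gcongr
  exact osc_bound a s ha

lemma stR_integrable (Y : ℝ) (hY : 1 < Y) (B : ℂ)
    (hB : ∀ τ ∈ Icc (-(Real.pi/4)) 0, (B * Complex.exp ((Y * τ : ℝ) * Complex.I)).re ≤ 0) (a : ℝ) (ha : 0 < a) :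
    Integrable (fun s : ℝ => stR Y B a (s + ((-(Real.pi/4) : ℝ) : ℂ) * Complex.I)) := by
  have hd := (dexp (2*Y-1) (a/2) (by linarith) (by linarith)).1.const_mul (3 * ‖B‖^2)
  refine hd.mono' (stR_cont Y B a _).aestronglyMeasurable (Eventually.of_forall fun s => ?_)
  unfold stR
  rw [mul_assoc, norm_mul]
  calc _ ≤ Real.exp (-(a/2 * Real.exp s)) * (3 * ‖B‖^2 * Real.exp ((2 * Y - 1) * s)) := by
        gcongr
        · exact osc_bound a s ha.le
        · exact stR_factor Y B hB s
    _ = _ := by ring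

lemma stJ_eq (Y : ℝ) (hY : 1 < Y) (B : ℂ)
    (hB : ∀ τ ∈ Icc (-(Real.pi/4)) 0, (B * Complex.exp ((Y * τ : ℝ) * Complex.I)).re ≤ 0) (a : ℝ) (ha : 0 < a) :
    stJ Y B a = -B * (Complex.exp ((-(Real.pi/2 * (Y-1)) : ℝ) * Complex.I) * (((1/a)^(Y-1) * Real.Gamma (Y-1) : ℝ) : ℂ))
      + ∫ s : ℝ, stR Y B a (s + ((-(Real.pi/4) : ℝ) : ℂ) * Complex.I) := by
  unfold stJ
  rw [J_shift Y hY B hB a ha.le]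
  obtain ⟨h1, h2⟩ := main_shift Y hY a ha
  rw [← h2, ← integral_const_mul, ← integral_add (h1.const_mul _) (stR_integrable Y hY B hB a ha)]
  congr 1
  ext s
  unfold stR
  generalize ((s:ℂ) + ((-(Real.pi/4) : ℝ) : ℂ) * Complex.I) = z
  have : Complex.exp (((Y:ℂ)-1) * z) = Complex.exp (Y * z) * Complex.exp (-z) := by
    rw [← Complex.exp_add]; congr 1; ring
  simp only [this]
  ring

lemma stJ_diff (Y : ℝ) (hY : 1 < Y) (B : ℂ)
    (hB : ∀ τ ∈ Icc (-(Real.pi/4)) 0, (B * Complex.exp ((Y * τ : ℝ) * Complex.I)).re ≤ 0) :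
    ∃ K : ℝ, 0 ≤ K ∧ ∀ a : ℝ, 0 < a →
    ‖stJ Y B a - stJ Y B (a+1) - (-B * Complex.exp ((-(Real.pi/2 * (Y-1)) : ℝ) * Complex.I)) *
      ((Real.Gamma (Y-1) * (a ^ (1-Y) - (a+1)^(1-Y)) : ℝ) : ℂ)‖ ≤ K * a ^ (-(2*Y)) := by
  refine ⟨6 * ‖B‖^2 * ((2:ℝ)^(2*Y) * Real.Gamma (2*Y)), ?_, fun a ha => ?_⟩
  · have := Real.Gamma_pos_of_pos (s := 2*Y) (by linarith)
    positivity
  have hpow : ∀ b : ℝ, 0 < b → (1/b)^(Y-1) = b^(1-Y) := by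
    intro b hb
    rw [one_div, Real.inv_rpow hb.le, ← Real.rpow_neg hb.le]; congr 1; ring
  rw [stJ_eq Y hY B hB a ha, stJ_eq Y hY B hB (a+1) (by linarith), hpow a ha, hpow (a+1) (by linarith)]
  have hR := stR_integrable Y hY B hB a ha
  have hR1 := stR_integrable Y hY B hB (a+1) (by linarith)
  rw [show ∀ x y w : ℂ, ∀ p g : ℝ, (x * (y * ((p * g : ℝ):ℂ)) + w) = x * y * (p * g) + w by intros; push_cast; ring,
    show ∀ x y w : ℂ, ∀ p g : ℝ, (x * (y * ((p * g : ℝ):ℂ)) + w) = x * y * (p * g) + w by intros; push_cast; ring]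
  have : ∀ x w w' : ℂ, ∀ p q g : ℝ, (x * (p * g) + w) - (x * (q * g) + w') - x * ((g * (p - q) : ℝ):ℂ) = w - w' := by
    intros; push_cast; ring
  rw [this, ← integral_sub hR hR1]
  have hd := dexp (2*Y) (a/2) (by linarith) (by linarith)
  refine (norm_integral_le_of_norm_le (hd.1.const_mul (6 * ‖B‖^2)) (Eventually.of_forall fun s => ?_)).trans ?_
  · unfold stR
    rw [show ∀ e e' x y : ℂ, e * x * y - e' * x * y = (e - e') * (x * y) by intros; ring, norm_mul]
    calc _ ≤ Real.exp (-(a/2 * Real.exp s)) * (2 * Real.exp s) * (3 * ‖B‖^2 * Real.exp ((2 * Y - 1) * s)) := by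
          gcongr
          · exact osc_diff_bound a s ha.le
          · exact stR_factor Y B hB s
      _ = _ := by
        rw [show 2 * Y * s = s + (2 * Y - 1) * s by ring, Real.exp_add]; ring
  · rw [integral_const_mul, hd.2]
    apply le_of_eq
    rw [one_div, inv_div, Real.div_rpow (by norm_num) ha.le, Real.rpow_neg ha.le]
    ring


lemma pow_pert (Y x y : ℝ) (hY : 0 < Y) (hx : 0 < x) (hy : x / 2 ≤ y) :
    |y ^ (-Y) - x ^ (-Y)| ≤ Y * 2 ^ (Y+1) * x ^ (-(Y+1)) * |y - x| := by
  have h := Convex.norm_image_sub_le_of_norm_hasDerivWithin_le (𝕜 := ℝ) (f := fun z : ℝ => z ^ (-Y))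
    (f' := fun z => (-Y) * z ^ (-Y - 1)) (s := Ici (x/2)) (x := x) (y := y) (C := Y * 2 ^ (Y+1) * x ^ (-(Y+1)))
    ?_ ?_ (convex_Ici _) (by simp; linarith) hy
  · simpa using h
  · intro z hz
    have hz' : 0 < z := lt_of_lt_of_le (by linarith) hz
    exact (Real.hasDerivAt_rpow_const (Or.inl hz'.ne')).hasDerivWithinAt
  · intro z hz
    have hz0 : x / 2 ≤ z := hz
    have hz' : 0 < z := lt_of_lt_of_le (by linarith) hz
    rw [norm_mul, Real.norm_of_nonneg (by positivity : (0:ℝ) ≤ z ^ (-Y-1)), norm_neg, Real.norm_of_nonneg hY.le,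
      mul_assoc, show -Y - 1 = -(Y+1) by ring]
    gcongr
    calc z ^ (-(Y+1)) ≤ (x/2) ^ (-(Y+1)) := Real.rpow_le_rpow_of_nonpos (by linarith) hz0 (by linarith)
      _ = _ := by
        rw [Real.div_rpow hx.le (by norm_num), Real.rpow_neg (by norm_num : (0:ℝ) ≤ 2), div_inv_eq_mul, mul_comm]

lemma pow_diff (Y a : ℝ) (hY : 1 < Y) (ha : 0 < a) :
    |(a ^ (1-Y) - (a+1) ^ (1-Y)) / (Y - 1) - a ^ (-Y)| ≤ Y * 2 ^ (Y+1) * a ^ (-(Y+1)) := by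
  have hY1 : 1 - Y ≠ 0 := by intro h; linarith
  have h := Convex.norm_image_sub_le_of_norm_hasDerivWithin_le (𝕜 := ℝ)
    (f := fun z : ℝ => z ^ (1-Y) / (1 - Y) - z * a ^ (-Y))
    (f' := fun z => z ^ (-Y) - a ^ (-Y)) (s := Icc a (a+1)) (x := a) (y := a+1) (C := Y * 2 ^ (Y+1) * a ^ (-(Y+1)))
    ?_ ?_ (convex_Icc _ _) (by simp) (by simp)
  · simp only [add_sub_cancel_left, norm_one, mul_one] at h
    refine le_trans (le_of_eq ?_) h
    rw [Real.norm_eq_abs]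
    congr 1
    have : Y - 1 ≠ 0 := by intro h; linarith
    field_simp
    ring
  · intro z hz
    have hz' : 0 < z := lt_of_lt_of_le ha hz.1
    have h1 := (Real.hasDerivAt_rpow_const (x := z) (p := 1 - Y) (Or.inl hz'.ne')).div_const (1 - Y)
    have h2 := h1.sub ((hasDerivAt_id z).mul_const (a ^ (-Y)))
    refine (HasDerivAt.congr_deriv h2 ?_).hasDerivWithinAt
    rw [mul_div_cancel_left₀ _ hY1]
    simp
  · intro z hz
    have := pow_pert Y a z (by linarith) ha (by linarith [hz.1])
    refine this.trans ?_
    refine mul_le_of_le_one_right (by positivity) ?_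
    rw [abs_le]; constructor <;> linarith [hz.1, hz.2]

lemma gamma_neg_facts (Y : ℝ) (hY : Y ∈ Ioo (1:ℝ) 2) :
    0 < Real.Gamma (-Y) ∧
    -(Real.Gamma (-Y) * Real.sin (Real.pi * Y)) * Real.Gamma (Y - 1) = Real.pi / (Y * (Y - 1)) := by
  obtain ⟨h1, h2⟩ := hY
  have hs : Real.sin (Real.pi * Y) < 0 := by
    have : 0 < Real.sin (Real.pi * Y - Real.pi) := Real.sin_pos_of_pos_of_lt_pi (by nlinarith [Real.pi_pos]) (by nlinarith [Real.pi_pos])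
    rw [Real.sin_sub_pi] at this
    linarith
  have hr := Real.Gamma_mul_Gamma_one_sub (-Y)
  rw [show Real.pi * -Y = -(Real.pi * Y) by ring, Real.sin_neg, show 1 - -Y = Y + 1 by ring] at hr
  have hg1 : Real.Gamma (Y + 1) = Y * ((Y - 1) * Real.Gamma (Y - 1)) := by
    rw [Real.Gamma_add_one (by linarith)]
    congr 1
    conv_lhs => rw [show Y = (Y - 1) + 1 by ring]
    rw [Real.Gamma_add_one (by linarith)]
  have hg : 0 < Real.Gamma (Y+1) := Real.Gamma_pos_of_pos (by linarith)
  have hpos : 0 < Real.Gamma (-Y) := by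
    have : 0 < Real.Gamma (-Y) * Real.Gamma (Y+1) := by
      rw [hr]; exact div_pos Real.pi_pos (by linarith)
    exact (pos_iff_pos_of_mul_pos this).mpr hg
  refine ⟨hpos, ?_⟩
  rw [hg1] at hr
  have hne : -Real.sin (Real.pi * Y) ≠ 0 := by linarith
  rw [eq_div_iff hne] at hr
  rw [eq_div_iff (mul_ne_zero (by linarith) (by linarith))]
  linear_combination hr

/-- exponent constant of the stable law on the positive half line -/
noncomputable def stB (Y C : ℝ) : ℂ :=
  ((C * Real.Gamma (-Y) : ℝ) : ℂ) * Complex.exp ((-(Real.pi * Y / 2) : ℝ) * Complex.I)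

lemma stB_rot_re (Y C τ : ℝ) : (stB Y C * Complex.exp ((τ : ℝ) * Complex.I)).re =
    C * Real.Gamma (-Y) * Real.cos (τ - Real.pi * Y / 2) := by
  unfold stB
  rw [mul_assoc, ← Complex.exp_add, Complex.re_ofReal_mul, ← add_mul, ← Complex.ofReal_add, Complex.exp_ofReal_mul_I_re]
  congr 2; ring

lemma stB_sector (Y C : ℝ) (hY : Y ∈ Ioo (1:ℝ) 2) (hC : 0 < C) :
    ∀ τ ∈ Icc (-(Real.pi/4)) 0, (stB Y C * Complex.exp ((Y * τ : ℝ) * Complex.I)).re ≤ 0 := by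
  intro τ hτ
  rw [stB_rot_re]
  have hg := (gamma_neg_facts Y hY).1
  refine mul_nonpos_of_nonneg_of_nonpos (by positivity) ?_
  rw [← Real.cos_neg]
  have hp := Real.pi_pos
  obtain ⟨h1, h2⟩ := hY
  obtain ⟨h3, h4⟩ := hτ
  apply Real.cos_nonpos_of_pi_div_two_le_of_le <;> nlinarith

lemma stB_main (Y C : ℝ) : (-stB Y C * Complex.exp ((-(Real.pi/2 * (Y-1)) : ℝ) * Complex.I)).re =
    -(C * Real.Gamma (-Y) * Real.sin (Real.pi * Y)) := by
  rw [neg_mul, Complex.neg_re, stB_rot_re]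
  congr 2
  rw [show -(Real.pi/2 * (Y-1)) - Real.pi * Y / 2 = -(Real.pi * Y - Real.pi/2) by ring, Real.cos_neg, Real.cos_sub_pi_div_two]

lemma stB_eq (Y C : ℝ) : stB Y C = ((C * Real.Gamma (-Y) : ℝ) : ℂ) *
    (((Real.cos (Real.pi * Y / 2) : ℝ) : ℂ) - Complex.I * ((Real.sin (Real.pi * Y / 2) : ℝ) : ℂ)) := by
  unfold stB
  rw [Complex.exp_mul_I, ← Complex.ofReal_cos, ← Complex.ofReal_sin, Real.cos_neg, Real.sin_neg]
  push_cast; ring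

section stable
variable {Ω : Type} [MeasurableSpace Ω] (P : Measure Ω) [IsProbabilityMeasure P]

lemma stable_char_pos (Y C : ℝ) (U : Ω → ℝ) (hUchar : ∀ u : ℝ, (∫ ω, Complex.exp (Complex.I * u * (U ω)) ∂P) =
      Complex.exp (((C * Real.Gamma (-Y) * |u| ^ Y : ℝ) : ℂ) *
        (((Real.cos (Real.pi * Y / 2) : ℝ) : ℂ)
          - Complex.I * ((Real.sign u : ℝ) : ℂ) * ((Real.sin (Real.pi * Y / 2) : ℝ) : ℂ)))) :
    ∀ u : ℝ, 0 < u → (∫ ω, Complex.exp (Complex.I * u * (U ω)) ∂P) =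
      Complex.exp (stB Y C * ((u ^ Y : ℝ) : ℂ)) := by
  intro u hu
  rw [hUchar, abs_of_pos hu, Real.sign_of_pos hu, stB_eq]
  congr 1
  push_cast; ring

lemma stable_tail (Y C : ℝ) (hY : Y ∈ Ioo (1:ℝ) 2) (hC : 0 < C) (U : Ω → ℝ) (hU : Measurable U)
    (hchar : ∀ u : ℝ, 0 < u → (∫ ω, Complex.exp (Complex.I * u * (U ω)) ∂P) =
      Complex.exp (stB Y C * ((u ^ Y : ℝ) : ℂ))) :
    Integrable U P ∧ ∃ K : ℝ, 0 ≤ K ∧ ∀ v : ℝ, 2 ≤ v →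
      |P.real {ω | v ≤ U ω} - C / Y * v ^ (-Y)| ≤ K * v ^ (-(Y+1)) := by
  have hBre : (stB Y C).re ≤ 0 := by
    have := stB_sector Y C hY hC 0 ⟨by linarith [Real.pi_pos], le_rfl⟩
    simpa using this
  have hmom := abs_moment P Y hY.1 (stB Y C) hBre U hU hchar
  refine ⟨?_, ?_⟩
  · have := (hmom 0).1
    simp only [sub_zero] at this
    exact (integrable_norm_iff hU.aestronglyMeasurable).mp this
  obtain ⟨K, hK, hKb⟩ := stJ_diff Y hY.1 (stB Y C) (stB_sector Y C hY hC)
  have hY1 : 1 < Y := hY.1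
  have hY0 : 0 < Y := by linarith
  set T : ℝ → ℝ := fun a => (∫ ω, |U ω - a| ∂P - ∫ ω, |U ω - (a+1)| ∂P + 1) / 2 with hT
  set L := C / Y * (Y * 2 ^ (Y+1)) + K / Real.pi with hL
  have hL0 : 0 ≤ L := by positivity
  have hTa : ∀ a : ℝ, 1 ≤ a → |T a - C / Y * a ^ (-Y)| ≤ L * a ^ (-(Y+1)) := by
    intro a ha
    have ha0 : 0 < a := by linarith
    have e1 := (hmom a).2
    have e2 := (hmom (a+1)).2
    rw [abs_of_pos ha0] at e1
    rw [abs_of_pos (by linarith : 0 < a+1)] at e2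
    change _ = _ + (stJ Y (stB Y C) a).re at e1
    change _ = _ + (stJ Y (stB Y C) (a+1)).re at e2
    have hb := (Complex.abs_re_le_norm _).trans (hKb a ha0)
    rw [Complex.sub_re, Complex.sub_re, Complex.re_mul_ofReal, stB_main] at hb
    have hgm := (gamma_neg_facts Y hY).2
    have hpi := Real.pi_pos
    have key : T a = ((stJ Y (stB Y C) a).re - (stJ Y (stB Y C) (a+1)).re) / Real.pi := by
      rw [hT, eq_div_iff hpi.ne']
      simp only []
      linear_combination e1 - e2
    have hmainc : -(C * Real.Gamma (-Y) * Real.sin (Real.pi * Y)) * (Real.Gamma (Y-1) * (a ^ (1-Y) - (a+1)^(1-Y)))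
        = Real.pi * (C / Y * ((a ^ (1-Y) - (a+1) ^ (1-Y)) / (Y - 1))) := by
      have : -(C * Real.Gamma (-Y) * Real.sin (Real.pi * Y)) * (Real.Gamma (Y-1) * (a ^ (1-Y) - (a+1)^(1-Y)))
        = C * (a ^ (1-Y) - (a+1)^(1-Y)) * (-(Real.Gamma (-Y) * Real.sin (Real.pi * Y)) * Real.Gamma (Y - 1)) := by ring
      rw [this, hgm]
      field_simp
    rw [hmainc] at hb
    have hpd := pow_diff Y a hY1 ha0
    set D := (a ^ (1-Y) - (a+1) ^ (1-Y)) / (Y - 1) with hD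
    have hTD : |T a - C / Y * D| ≤ K / Real.pi * a ^ (-(Y+1)) := by
      have h2 : a ^ (-(2*Y)) ≤ a ^ (-(Y+1)) := Real.rpow_le_rpow_of_exponent_le ha (by linarith)
      have h3 : T a - C / Y * D = ((stJ Y (stB Y C) a).re - (stJ Y (stB Y C) (a+1)).re - Real.pi * (C / Y * D)) / Real.pi := by
        rw [key]; field_simp
      rw [h3, abs_div, abs_of_pos hpi, div_le_iff₀ hpi]
      calc _ ≤ K * a ^ (-(2*Y)) := hb
        _ ≤ K * a ^ (-(Y+1)) := by gcongr
        _ = _ := by field_simp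
    calc |T a - C / Y * a ^ (-Y)| = |(T a - C / Y * D) + C / Y * (D - a ^ (-Y))| := by congr 1; ring
      _ ≤ |T a - C / Y * D| + |C / Y * (D - a ^ (-Y))| := abs_add_le _ _
      _ ≤ K / Real.pi * a ^ (-(Y+1)) + C / Y * (Y * 2 ^ (Y+1) * a ^ (-(Y+1))) := by
        rw [abs_mul, abs_of_pos (by positivity : 0 < C / Y)]
        gcongr
      _ = _ := by rw [hL]; ring
  -- sandwich
  have hTint : ∀ a : ℝ, T a = ∫ ω, (|U ω - a| - |U ω - (a+1)| + 1) / 2 ∂P := by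
    intro a
    have e : Integrable (fun ω => |U ω - a| - |U ω - (a+1)|) P := (hmom a).1.sub (hmom (a+1)).1
    rw [integral_div, integral_add e (integrable_const _),
      integral_sub (hmom a).1 (hmom (a+1)).1]
    simp [hT]
  have hIi : ∀ a : ℝ, Integrable (fun ω => (|U ω - a| - |U ω - (a+1)| + 1) / 2) P := fun a =>
    (((hmom a).1.sub (hmom (a+1)).1).add (integrable_const _)).div_const 2
  have hms : ∀ v : ℝ, MeasurableSet {ω | v ≤ U ω} := fun v => measurableSet_le measurable_const hU
  have hPr : ∀ v : ℝ, P.real {ω | v ≤ U ω} = ∫ ω, ({ω | v ≤ U ω}.indicator (fun _ => (1:ℝ)) ω) ∂P := by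
    intro v
    rw [integral_indicator (hms v)]; simp
  have hInd : ∀ v : ℝ, Integrable ({ω | v ≤ U ω}.indicator (fun _ => (1:ℝ))) P := fun v =>
    (integrable_const _).indicator (hms v)
  have hup : ∀ a : ℝ, P.real {ω | a + 1 ≤ U ω} ≤ T a := by
    intro a
    rw [hPr, hTint]
    refine integral_mono (hInd _) (hIi a) fun ω => ?_
    simp only [indicator_apply, mem_ofPred_eq]
    split_ifs with h
    · rw [abs_of_nonneg (by linarith), abs_of_nonneg (by linarith)]; linarith
    · have := abs_sub_abs_le_abs_sub (U ω - (a+1)) (U ω - a)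
      rw [show U ω - (a+1) - (U ω - a) = -1 by ring, abs_neg, abs_one] at this
      linarith
  have hlo : ∀ a : ℝ, T a ≤ P.real {ω | a ≤ U ω} := by
    intro a
    rw [hPr, hTint]
    refine integral_mono (hIi a) (hInd _) fun ω => ?_
    simp only [indicator_apply, mem_ofPred_eq]
    split_ifs with h
    · have := abs_sub_abs_le_abs_sub (U ω - a) (U ω - (a+1))
      rw [show U ω - a - (U ω - (a+1)) = 1 by ring, abs_one] at this
      linarith
    · push Not at h
      rw [abs_of_nonpos (by linarith), abs_of_nonpos (by linarith)]; linarith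
  refine ⟨L * 2 ^ (Y+1) + L + C / Y * (Y * 2 ^ (Y+1)), by positivity, fun v hv => ?_⟩
  have hv0 : 0 < v := by linarith
  have h1 := hup (v-1)
  rw [sub_add_cancel] at h1
  have h2 := hlo v
  have h3 := hTa v (by linarith)
  have h4 := hTa (v-1) (by linarith)
  have h5 := pow_pert Y v (v-1) hY0 hv0 (by linarith)
  rw [show v - 1 - v = -1 by ring, abs_neg, abs_one, mul_one] at h5
  have h6 : (v-1) ^ (-(Y+1)) ≤ 2 ^ (Y+1) * v ^ (-(Y+1)) := by
    calc (v-1) ^ (-(Y+1)) ≤ (v/2) ^ (-(Y+1)) := Real.rpow_le_rpow_of_nonpos (by linarith) (by linarith) (by linarith)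
      _ = _ := by
        rw [Real.div_rpow hv0.le (by norm_num), Real.rpow_neg (by norm_num : (0:ℝ) ≤ 2), div_inv_eq_mul, mul_comm]
  have hw : 0 ≤ v ^ (-(Y+1)) := by positivity
  have hz : (0:ℝ) ≤ 2 ^ (Y+1) := by positivity
  have h7 := mul_le_mul_of_nonneg_left h6 hL0
  have h8 := mul_le_mul_of_nonneg_left (le_of_abs_le h5) (by positivity : 0 ≤ C / Y)
  have h9 : 0 ≤ L * v ^ (-(Y+1)) := by positivity
  have h10 : 0 ≤ L * 2 ^ (Y+1) * v ^ (-(Y+1)) := by positivity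
  have h11 : 0 ≤ C / Y * (Y * 2 ^ (Y+1)) * v ^ (-(Y+1)) := by positivity
  rw [abs_le] at h3 h4 ⊢
  constructor
  · nlinarith [h3.1]
  · nlinarith [h4.2]

lemma stable_crude (Y C : ℝ) (hY : Y ∈ Ioo (1:ℝ) 2) (hC : 0 < C) (U : Ω → ℝ) (hU : Measurable U)
    (hUchar : ∀ u : ℝ, (∫ ω, Complex.exp (Complex.I * u * (U ω)) ∂P) =
      Complex.exp (((C * Real.Gamma (-Y) * |u| ^ Y : ℝ) : ℂ) *
        (((Real.cos (Real.pi * Y / 2) : ℝ) : ℂ)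
          - Complex.I * ((Real.sign u : ℝ) : ℂ) * ((Real.sin (Real.pi * Y / 2) : ℝ) : ℂ)))) :
    ∃ K : ℝ, 0 ≤ K ∧ ∀ r : ℝ, 0 < r → P.real {ω | r < |U ω|} ≤ K * r ^ (-Y) := by
  have hg := (gamma_neg_facts Y hY).1
  have hY0 : 0 < Y := by linarith [hY.1]
  have hcos : Real.cos (Real.pi * Y / 2) ≤ 0 := by
    have hp := Real.pi_pos
    obtain ⟨h1, h2⟩ := hY
    apply Real.cos_nonpos_of_pi_div_two_le_of_le <;> nlinarith
  have : IsProbabilityMeasure (P.map U) := Measure.isProbabilityMeasure_map hU.aemeasurable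
  have hch : ∀ t : ℝ, ‖1 - charFun (P.map U) t‖ ≤ 4 * (C * Real.Gamma (-Y)) * |t| ^ Y := by
    intro t
    have : charFun (P.map U) t = ∫ ω, Complex.exp (Complex.I * t * (U ω)) ∂P := by
      rw [charFun_apply_real, integral_map hU.aemeasurable (by fun_prop)]
      congr 1; ext ω; congr 1; ring
    rw [this, hUchar]
    refine (norm_exp_sub_one_le_of_re_nonpos _ ?_).trans ?_
    · rw [Complex.re_ofReal_mul]
      refine mul_nonpos_of_nonneg_of_nonpos (by positivity) ?_
      rw [Complex.sub_re, Complex.ofReal_re, mul_assoc, ← Complex.ofReal_mul, Complex.I_mul_re,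
        Complex.ofReal_im, neg_zero, sub_zero]
      exact hcos
    · rw [norm_mul, Complex.norm_real, Real.norm_of_nonneg (by positivity)]
      have h2 : ‖(((Real.cos (Real.pi * Y / 2) : ℝ) : ℂ)
          - Complex.I * ((Real.sign t : ℝ) : ℂ) * ((Real.sin (Real.pi * Y / 2) : ℝ) : ℂ))‖ ≤ 2 := by
        refine (norm_sub_le _ _).trans ?_
        rw [norm_mul, norm_mul, Complex.norm_I, Complex.norm_real, Complex.norm_real, Complex.norm_real, one_mul]
        have a1 := Real.abs_cos_le_one (Real.pi * Y / 2)
        have a2 := Real.abs_sin_le_one (Real.pi * Y / 2)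
        have a3 : |Real.sign t| ≤ 1 := by
          rcases Real.sign_apply_eq t with h | h | h <;> simp [h]
        simp only [Real.norm_eq_abs]
        nlinarith [abs_nonneg (Real.sign t), abs_nonneg (Real.sin (Real.pi * Y / 2))]
      have h3 : 0 ≤ C * Real.Gamma (-Y) * |t| ^ Y := by positivity
      nlinarith
  refine ⟨2 * (4 * (C * Real.Gamma (-Y)) * 2 ^ Y), by positivity, fun r hr => ?_⟩
  have h := measureReal_abs_gt_le_integral_charFun (μ := P.map U) hr
  rw [map_measureReal_apply hU (measurableSet_lt measurable_const (by fun_prop))] at h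
  refine (show _ ≤ _ from h).trans ?_
  have hI := intervalIntegral.norm_integral_le_of_norm_le_const (a := -2 * r⁻¹) (b := 2 * r⁻¹)
    (f := fun t => 1 - charFun (P.map U) t) (C := 4 * (C * Real.Gamma (-Y)) * (2 * r⁻¹) ^ Y) (fun t ht => by
      refine (hch t).trans ?_
      gcongr
      rw [uIoc_of_le (by rw [neg_mul]; linarith [show 0 < 2 * r⁻¹ by positivity])] at ht
      rw [abs_le]; constructor <;> linarith [ht.1, ht.2])
  calc _ ≤ 2⁻¹ * r * (4 * (C * Real.Gamma (-Y)) * (2 * r⁻¹) ^ Y * |2 * r⁻¹ - -2 * r⁻¹|) := by gcongr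
    _ = _ := by
      rw [show 2 * r⁻¹ - -2 * r⁻¹ = 4 * r⁻¹ by ring, abs_of_pos (by positivity), Real.mul_rpow (by norm_num) (by positivity),
        Real.inv_rpow hr.le, Real.rpow_neg hr.le]
      field_simp
      ring

end stable

lemma single_tail {Ω : Type} [MeasurableSpace Ω] (P : Measure Ω) [IsProbabilityMeasure P]
    (Y c a b ε : ℝ) (hY : 0 < Y) (hc : 0 ≤ c) (ha : 0 < a) (hb : 0 < b) (hε : 0 < ε) (hbε : b * ε ≤ 1/4)
    (X W : Ω → ℝ) (hX : Measurable X) (hW : Measurable W) (hWi : Integrable W P)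
    (hXW : IndepFun X W P) (K : ℝ) (hK : 0 ≤ K)
    (hT : ∀ v ≥ 2, |P.real {ω | v ≤ X ω} - c * v^(-Y)| ≤ K * v^(-(Y+1))) :
    ∃ K' v0 : ℝ, 0 ≤ K' ∧ 0 < v0 ∧ ∀ γ : ℝ, |γ| ≤ 1 → ∀ v ≥ v0,
      |P.real {ω | |W ω| ≤ ε * v ∧ v ≤ a * X ω + b * W ω + γ} - c * a^Y * v^(-Y)| ≤ K' * v^(-(Y+1)) := by
  set μ := P.map X with hμ
  set ν := P.map W with hν
  have : IsProbabilityMeasure μ := Measure.isProbabilityMeasure_map hX.aemeasurable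
  have : IsProbabilityMeasure ν := Measure.isProbabilityMeasure_map hW.aemeasurable
  have hprod : P.map (fun ω => (X ω, W ω)) = μ.prod ν :=
    (indepFun_iff_map_prod_eq_prod_map_map hX.aemeasurable hW.aemeasurable).1 hXW
  have hνi : Integrable (fun w : ℝ => |w|) ν := by
    rw [hν, integrable_map_measure (by fun_prop) hW.aemeasurable]
    exact hWi.abs
  set m := ∫ w, |w| ∂ν with hm
  have hm0 : 0 ≤ m := integral_nonneg fun _ => abs_nonneg _
  set F : ℝ → ℝ := fun x => P.real {ω | x ≤ X ω} with hF
  have hFm : Measurable F := by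
    have : Antitone F := fun x y hxy => measureReal_mono (fun ω (h : y ≤ X ω) => hxy.trans h)
    exact this.measurable
  have hFμ : ∀ x, F x = μ.real {z | x ≤ z} := by
    intro x
    have hms : MeasurableSet {z : ℝ | x ≤ z} := measurableSet_le measurable_const measurable_id
    rw [hμ, map_measureReal_apply hX hms]
    rfl
  -- Fubini
  have key : ∀ γ v : ℝ, P.real {ω | |W ω| ≤ ε * v ∧ v ≤ a * X ω + b * W ω + γ} =
      ∫ w in {w | |w| ≤ ε * v}, F ((v - γ - b * w) / a) ∂ν := by
    intro γ v
    set S : Set (ℝ × ℝ) := {p | |p.2| ≤ ε * v ∧ v ≤ a * p.1 + b * p.2 + γ} with hS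
    have hSm1 : MeasurableSet {p : ℝ × ℝ | |p.2| ≤ ε * v} := measurableSet_le (by fun_prop) (by fun_prop)
    have hSm2 : MeasurableSet {p : ℝ × ℝ | v ≤ a * p.1 + b * p.2 + γ} :=
      measurableSet_le (by fun_prop) (by fun_prop)
    have hSm : MeasurableSet S := hSm1.inter hSm2
    have h1 : P.real {ω | |W ω| ≤ ε * v ∧ v ≤ a * X ω + b * W ω + γ} = (μ.prod ν).real S := by
      rw [← hprod, map_measureReal_apply (by fun_prop) hSm]; rfl
    rw [h1, measureReal_def, Measure.prod_apply_symm hSm, ← integral_indicator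
      (measurableSet_le (by fun_prop) (by fun_prop)), ← integral_toReal
      (measurable_measure_prodMk_right hSm).aemeasurable (by filter_upwards with w using measure_lt_top _ _)]
    congr 1; ext w
    by_cases hw : |w| ≤ ε * v
    · rw [indicator_of_mem (by exact hw), hFμ, measureReal_def]
      congr 2; ext x
      simp only [hS, mem_preimage, mem_ofPred_eq, hw, true_and]
      rw [div_le_iff₀ ha]
      constructor <;> intro h <;> nlinarith
    · rw [indicator_of_notMem (by exact hw)]
      have : ((fun x => (x, w)) ⁻¹' S) = ∅ := by
        ext x; simp [hS, hw]
      simp [this]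
  set K1 := K * (2*a)^(Y+1) with hK1
  set K2 := c * a^Y * (Y * 2^(Y+1)) with hK2
  set K3 := c * a^Y * (1/ε) with hK3
  refine ⟨K1 + K2 * (1 + b * m) + K3 * m, max 4 (4*a), by positivity, by positivity, ?_⟩
  intro γ hγ v hv
  have hv4 : 4 ≤ v := (le_max_left _ _).trans hv
  have hva : 4*a ≤ v := (le_max_right _ _).trans hv
  have hv0 : 0 < v := by linarith
  set S : Set ℝ := {w | |w| ≤ ε * v} with hS
  have hSm : MeasurableSet S := measurableSet_le (by fun_prop) (by fun_prop)
  have hpt : ∀ w ∈ S, |F ((v - γ - b * w) / a) - c * a^Y * v^(-Y)| ≤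
      (K1 + K2 * (1 + b * |w|)) * v^(-(Y+1)) := by
    intro w hw
    have hw' : |w| ≤ ε * v := hw
    have hbw : |b * w| ≤ v / 4 := by
      rw [abs_mul, abs_of_pos hb]
      calc b * |w| ≤ b * (ε * v) := by gcongr
        _ = (b * ε) * v := by ring
        _ ≤ 1/4 * v := by gcongr
        _ = _ := by ring
    set y := v - γ - b * w with hy
    have hyv : v / 2 ≤ y := by
      have := abs_le.1 hbw; have := abs_le.1 hγ; rw [hy]; linarith
    have hy0 : 0 < y := by linarith
    have h2 : 2 ≤ y / a := by rw [le_div_iff₀ ha]; linarith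
    have e1 := hT (y / a) h2
    have e2 : (y/a)^(-Y) = a^Y * y^(-Y) := by
      rw [Real.div_rpow hy0.le ha.le, Real.rpow_neg ha.le]; field_simp
    have e3 : (y/a)^(-(Y+1)) ≤ (2*a)^(Y+1) * v^(-(Y+1)) := by
      have : (y/a)^(-(Y+1)) ≤ (v/(2*a))^(-(Y+1)) := by
        apply Real.rpow_le_rpow_of_nonpos (by positivity) _ (by linarith)
        rw [div_le_div_iff₀ (by positivity) ha]; nlinarith
      refine this.trans (le_of_eq ?_)
      rw [Real.div_rpow hv0.le (by positivity), Real.rpow_neg (by positivity : (0:ℝ) ≤ 2*a)]; field_simp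
    have e4 := pow_pert Y v y hY hv0 hyv
    have e5 : |y - v| ≤ 1 + b * |w| := by
      have : y - v = -(γ + b * w) := by rw [hy]; ring
      rw [this, abs_neg]
      refine (abs_add_le _ _).trans ?_
      rw [abs_mul, abs_of_pos hb]; linarith
    have hvp : 0 ≤ v^(-(Y+1)) := by positivity
    calc |F (y/a) - c * a^Y * v^(-Y)| = |(F (y/a) - c * (y/a)^(-Y)) + c * a^Y * (y^(-Y) - v^(-Y))| := by
          congr 1; rw [e2]; ring
      _ ≤ |F (y/a) - c * (y/a)^(-Y)| + |c * a^Y * (y^(-Y) - v^(-Y))| := abs_add_le _ _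
      _ ≤ K * ((2*a)^(Y+1) * v^(-(Y+1))) + c * a^Y * (Y * 2^(Y+1) * v^(-(Y+1)) * (1 + b * |w|)) := by
          rw [abs_mul, abs_of_nonneg (by positivity : 0 ≤ c * a^Y)]
          gcongr
          · exact e1.trans (by gcongr)
          · exact e4.trans (by gcongr)
      _ = _ := by rw [hK1, hK2]; ring
  have hFb : ∀ x, |F x| ≤ 1 := fun x => by
    rw [abs_of_nonneg measureReal_nonneg]; exact measureReal_le_one
  have hFi : Integrable (fun w => F ((v - γ - b * w) / a)) ν :=
    Integrable.of_bound (by have : Measurable (fun w => F ((v - γ - b * w) / a)) := hFm.comp (by fun_prop)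
                            exact this.aestronglyMeasurable) 1
      (by filter_upwards with w using hFb _)
  have hmk : ν.real Sᶜ ≤ m / (ε * v) := by
    have h := mul_meas_ge_le_integral_of_nonneg (μ := ν) (f := fun w => |w|)
      (by filter_upwards with w using abs_nonneg _) hνi (ε * v)
    rw [le_div_iff₀ (by positivity), mul_comm]
    refine le_trans ?_ h
    gcongr
    · finiteness
    · intro w hw
      have : ¬ |w| ≤ ε * v := hw
      exact (not_le.1 this).le
  have hcompl : ν.real S = 1 - ν.real Sᶜ := by
    rw [probReal_compl_eq_one_sub hSm]; ring
  rw [key γ v]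
  have hsplit : (∫ w in S, F ((v - γ - b * w) / a) ∂ν) - c * a^Y * v^(-Y) =
      (∫ w in S, (F ((v - γ - b * w) / a) - c * a^Y * v^(-Y)) ∂ν) - c * a^Y * v^(-Y) * ν.real Sᶜ := by
    rw [integral_sub hFi.integrableOn (integrable_const _), setIntegral_const, hcompl, smul_eq_mul]
    ring
  have hbound : |∫ w in S, (F ((v - γ - b * w) / a) - c * a^Y * v^(-Y)) ∂ν| ≤
      (K1 + K2 * (1 + b * m)) * v^(-(Y+1)) := by
    have hgi : Integrable (fun w => (K1 + K2 * (1 + b * |w|)) * v^(-(Y+1))) ν :=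
      ((integrable_const K1).add (((integrable_const 1).add (hνi.const_mul b)).const_mul K2)).mul_const _
    calc |∫ w in S, (F ((v - γ - b * w) / a) - c * a^Y * v^(-Y)) ∂ν|
        ≤ ∫ w in S, |F ((v - γ - b * w) / a) - c * a^Y * v^(-Y)| ∂ν := abs_integral_le_integral_abs
      _ ≤ ∫ w in S, (K1 + K2 * (1 + b * |w|)) * v^(-(Y+1)) ∂ν := by
          apply setIntegral_mono_on _ hgi.integrableOn hSm hpt
          exact ((hFi.sub (integrable_const _)).abs).integrableOn
      _ ≤ ∫ w, (K1 + K2 * (1 + b * |w|)) * v^(-(Y+1)) ∂ν := by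
          apply setIntegral_le_integral hgi
          filter_upwards with w
          simp only [Pi.zero_apply]
          positivity
      _ = _ := by
          have i1 : Integrable (fun w : ℝ => b * |w|) ν := hνi.const_mul b
          have i2 : Integrable (fun w : ℝ => 1 + b * |w|) ν := (integrable_const 1).add i1
          rw [integral_mul_const, integral_add (integrable_const _) (i2.const_mul K2), integral_const_mul K2,
            integral_add (integrable_const _) i1, integral_const_mul b]
          simp [hm]
  have hrest : |c * a^Y * v^(-Y) * ν.real Sᶜ| ≤ K3 * m * v^(-(Y+1)) := by
    rw [abs_of_nonneg (by positivity)]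
    have : v^(-(Y+1)) = v^(-Y) / v := by
      rw [neg_add, ← sub_eq_add_neg, Real.rpow_sub_one hv0.ne']
    calc _ ≤ c * a^Y * v^(-Y) * (m / (ε * v)) := by gcongr
      _ = _ := by rw [this, hK3]; field_simp
  rw [hsplit]
  calc _ ≤ _ := abs_sub _ _
    _ ≤ (K1 + K2 * (1 + b * m)) * v^(-(Y+1)) + K3 * m * v^(-(Y+1)) := add_le_add hbound hrest
    _ = _ := by ring

set_option maxHeartbeats 1000000 in
lemma joint_tail {Ω : Type} [MeasurableSpace Ω] (P : Measure Ω) [IsProbabilityMeasure P]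
    (Y c M G : ℝ) (hY : 1 < Y) (hc : 0 ≤ c) (hM : 1 < M) (hG : 0 < G)
    (U V : Ω → ℝ) (hU : Measurable U) (hV : Measurable V) (hUi : Integrable U P) (hVi : Integrable V P)
    (hUV : IndepFun U V P) (K K₁ : ℝ) (hK : 0 ≤ K) (hK₁ : 0 ≤ K₁)
    (hTU : ∀ v ≥ 2, |P.real {ω | v ≤ U ω} - c * v^(-Y)| ≤ K * v^(-(Y+1)))
    (hTV : ∀ v ≥ 2, |P.real {ω | v ≤ V ω} - c * v^(-Y)| ≤ K₁ * v^(-(Y+1)))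
    (L L₁ : ℝ) (hL : 0 ≤ L) (hL₁ : 0 ≤ L₁)
    (hCU : ∀ r : ℝ, 0 < r → P.real {ω | r < |U ω|} ≤ L * r ^ (-Y))
    (hCV : ∀ r : ℝ, 0 < r → P.real {ω | r < |V ω|} ≤ L₁ * r ^ (-Y)) :
    ∃ K' v0 : ℝ, 0 ≤ K' ∧ 0 < v0 ∧ ∀ γ : ℝ, |γ| ≤ 1 → ∀ v ≥ v0,
      |P.real {ω | v ≤ max (U ω - V ω + γ) 0 + ((M - 1) * U ω + (G + 1) * V ω)} -
        c * (M^Y + (G+1)^Y) * v^(-Y)| ≤ K' * v^(-(Y+1)) := by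
  set D := M + G + 1 with hD
  have hD0 : 0 < D := by linarith
  set ε := 1 / (4 * D) with hε
  have hε0 : 0 < ε := by positivity
  have hεD : D * ε = 1 / 4 := by rw [hε]; field_simp
  obtain ⟨A1, w1, hA1, hw1, h1⟩ := single_tail P Y c M G ε (by linarith) hc (by linarith) hG hε0
    (by nlinarith) U V hU hV hVi hUV K hK hTU
  obtain ⟨A2, w2, hA2, hw2, h2⟩ := single_tail P Y c (G+1) (M-1) ε (by linarith) hc (by linarith)
    (by linarith) hε0 (by nlinarith) V U hV hU hUi hUV.symm K₁ hK₁ hTV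
  refine ⟨A1 + A2 + L * L₁ * ε^(-(2*Y)), max (max w1 w2) (4 * D), by positivity, by positivity, ?_⟩
  intro γ hγ v hv
  have hvw1 : w1 ≤ v := ((le_max_left _ _).trans (le_max_left _ _)).trans hv
  have hvw2 : w2 ≤ v := ((le_max_right _ _).trans (le_max_left _ _)).trans hv
  have hvD : 4 * D ≤ v := (le_max_right _ _).trans hv
  have hv0 : 0 < v := by linarith
  have hv1 : 1 ≤ v := by linarith
  obtain ⟨x, hx⟩ : ∃ x, x = ε * v := ⟨_, rfl⟩
  have hvx : v = 4 * D * x := by rw [hx, hε]; field_simp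
  have hx1 : 1 ≤ x := by
    by_contra hcon
    have : 4 * D * x < 4 * D * 1 := by gcongr; linarith
    linarith
  have hγ' := abs_le.1 hγ
  have e1 := h1 γ hγ v hvw1
  have e2 := h2 0 (by simp) v hvw2
  rw [← hx] at e1 e2
  set A := {ω | v ≤ max (U ω - V ω + γ) 0 + ((M - 1) * U ω + (G + 1) * V ω)} with hA
  set S1 := {ω | |V ω| ≤ x ∧ v ≤ M * U ω + G * V ω + γ} with hS1
  set S2 := {ω | |U ω| ≤ x ∧ v ≤ (G+1) * V ω + (M-1) * U ω + 0} with hS2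
  set B := {ω | x < |U ω|} ∩ {ω | x < |V ω|} with hB
  have m2 : MeasurableSet S2 := by
    have a1 : MeasurableSet {ω | |U ω| ≤ x} := measurableSet_le (by fun_prop) (by fun_prop)
    have a2 : MeasurableSet {ω | v ≤ (G+1) * V ω + (M-1) * U ω + 0} :=
      measurableSet_le (by fun_prop) (by fun_prop)
    exact a1.inter a2
  have hdis : Disjoint S1 S2 := by
    rw [Set.disjoint_left]
    rintro ω ⟨g1, g2⟩ ⟨g3, g4⟩
    have g1' := abs_le.1 g1
    have g3' := abs_le.1 g3
    have p1 : M * U ω ≤ M * x := by gcongr; exact g3'.2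
    have p2 : G * V ω ≤ G * x := by gcongr; exact g1'.2
    nlinarith
  have hsub1 : S1 ∪ S2 ⊆ A := by
    rintro ω (⟨g1, g2⟩ | ⟨g1, g2⟩)
    · have := le_max_left (U ω - V ω + γ) 0
      show v ≤ _
      linarith
    · have := le_max_right (U ω - V ω + γ) 0
      show v ≤ _
      linarith
  have hsub2 : A ⊆ (S1 ∪ S2) ∪ B := by
    intro ω hω
    have hω' : v ≤ max (U ω - V ω + γ) 0 + ((M - 1) * U ω + (G + 1) * V ω) := hω
    by_cases g1 : |V ω| ≤ x
    · refine Or.inl (Or.inl ⟨g1, ?_⟩)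
      have g1' := abs_le.1 g1
      rcases max_cases (U ω - V ω + γ) 0 with ⟨hm, _⟩ | ⟨hm, hm'⟩
      · rw [hm] at hω'; linarith
      · exfalso
        rw [hm] at hω'
        have q : U ω ≤ 2 * x := by linarith
        have p1 : (M - 1) * U ω ≤ (M - 1) * (2 * x) := by gcongr
        have p2 : (G + 1) * V ω ≤ (G + 1) * x := by gcongr; exact g1'.2
        nlinarith
    · by_cases g2 : |U ω| ≤ x
      · refine Or.inl (Or.inr ⟨g2, ?_⟩)
        have g2' := abs_le.1 g2
        rcases max_cases (U ω - V ω + γ) 0 with ⟨hm, hm'⟩ | ⟨hm, hm'⟩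
        · exfalso
          rw [hm] at hω'
          have q : V ω ≤ 2 * x := by linarith
          have p1 : M * U ω ≤ M * x := by gcongr; exact g2'.2
          have p2 : G * V ω ≤ G * (2 * x) := by gcongr
          nlinarith
        · rw [hm] at hω'; linarith
      · exact Or.inr ⟨not_le.1 g2, not_le.1 g1⟩
  have hPB : P.real B ≤ L * L₁ * ε^(-(2*Y)) * v^(-(Y+1)) := by
    have hm : P.real B = P.real {ω | x < |U ω|} * P.real {ω | x < |V ω|} := by
      have := hUV.measure_inter_preimage_eq_mul {z : ℝ | x < |z|} {z : ℝ | x < |z|}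
        (measurableSet_lt (by fun_prop) (by fun_prop)) (measurableSet_lt (by fun_prop) (by fun_prop))
      rw [measureReal_def, measureReal_def, measureReal_def, ← ENNReal.toReal_mul]
      exact congrArg ENNReal.toReal this
    rw [hm]
    have hx0 : 0 < x := by linarith
    calc _ ≤ (L * x^(-Y)) * (L₁ * x^(-Y)) := by gcongr; exacts [hCU x hx0, hCV x hx0]
      _ = L * L₁ * x^(-(2*Y)) := by
          rw [show -(2*Y) = -Y + -Y by ring, Real.rpow_add hx0]; ring
      _ = L * L₁ * ε^(-(2*Y)) * v^(-(2*Y)) := by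
          rw [hx, Real.mul_rpow hε0.le hv0.le]; ring
      _ ≤ _ := by
          have : v^(-(2*Y)) ≤ v^(-(Y+1)) := Real.rpow_le_rpow_of_exponent_le hv1 (by linarith)
          gcongr
  have hun : P.real (S1 ∪ S2) = P.real S1 + P.real S2 := measureReal_union hdis m2
  have hlo : P.real S1 + P.real S2 ≤ P.real A := by rw [← hun]; exact measureReal_mono hsub1
  have hhi : P.real A ≤ P.real S1 + P.real S2 + P.real B := by
    rw [← hun]; exact (measureReal_mono hsub2).trans (measureReal_union_le _ _)
  have e1' := abs_le.1 e1
  have e2' := abs_le.1 e2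
  rw [abs_le]
  have hB0 : 0 ≤ P.real B := measureReal_nonneg
  constructor <;> nlinarith [e1'.1, e1'.2, e2'.1, e2'.2]

lemma gamma_tendsto (Y : ℝ) (hY : 1 < Y) (κ : ℝ → ℝ) (e₁ e₂ γ' : ℝ)
    (hκ : (fun t => κ t - (e₁ * t + e₂ * t ^ (2 - 1/Y))) =o[𝓝[>] (0:ℝ)]
      fun t => t ^ (2 - 1/Y)) :
    Tendsto (fun t : ℝ => t ^ (1 - 1/Y) * (γ' - κ t / t)) (𝓝[>] (0:ℝ)) (𝓝 0) := by
  have hp : 0 < 1 - 1/Y := by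
    have : 1/Y < 1 := by rw [div_lt_one (by linarith)]; exact hY
    linarith
  have hpow : Tendsto (fun t : ℝ => t ^ (1 - 1/Y)) (𝓝[>] (0:ℝ)) (𝓝 0) := by
    have : Tendsto (fun t : ℝ => t ^ (1 - 1/Y)) (𝓝 (0:ℝ)) (𝓝 (0 ^ (1 - 1/Y))) :=
      (Real.continuousAt_rpow_const _ _ (Or.inr hp.le)).tendsto
    rw [Real.zero_rpow hp.ne'] at this
    exact this.mono_left nhdsWithin_le_nhds
  have hq := hκ.tendsto_div_nhds_zero
  have hk : Tendsto (fun t : ℝ => t ^ (1 - 1/Y) * (γ' - e₁ - e₂ * t ^ (1 - 1/Y) -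
      t ^ (1 - 1/Y) * ((κ t - (e₁ * t + e₂ * t ^ (2 - 1/Y))) / t ^ (2 - 1/Y))))
      (𝓝[>] (0:ℝ)) (𝓝 (0 * (γ' - e₁ - e₂ * 0 - 0 * 0))) :=
    hpow.mul ((tendsto_const_nhds.sub (hpow.const_mul e₂)).sub (hpow.mul hq))
  rw [zero_mul] at hk
  refine hk.congr' ?_
  filter_upwards [self_mem_nhdsWithin] with t ht
  have ht0 : (0:ℝ) < t := ht
  have e : t ^ (2 - 1/Y) = t ^ (1 - 1/Y) * t := by
    rw [show 2 - 1/Y = (1 - 1/Y) + 1 by ring, Real.rpow_add_one ht0.ne']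
  have hpos : 0 < t ^ (1 - 1/Y) := by positivity
  congr 1
  rw [e]
  generalize t ^ (1 - 1/Y) = p at *
  field_simp
  ring

lemma exp_quot_bound (s v : ℝ) (hs : 0 < s) (hv : 0 ≤ v) : |(Real.exp (-(s * v)) - 1) / s| ≤ v := by
  rw [abs_div, abs_of_pos hs, div_le_iff₀ hs, abs_le]
  have h1 := Real.add_one_le_exp (-(s*v))
  have h2 : Real.exp (-(s*v)) ≤ 1 := Real.exp_le_one_iff.2 (by nlinarith)
  have : 0 ≤ v * s := by positivity
  constructor <;> linarith

lemma exp_quot_tendsto (v : ℝ) : Tendsto (fun s : ℝ => (Real.exp (-(s * v)) - 1) / s) (𝓝[>] 0) (𝓝 (-v)) := by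
  have h : HasDerivAt (fun s : ℝ => Real.exp (-(s * v))) (-v) 0 := by
    have h1 : HasDerivAt (fun s : ℝ => -(s * v)) (-(1 * v)) 0 := ((hasDerivAt_id 0).mul_const v).neg
    simpa using h1.exp
  have h2 := h.tendsto_slope_zero_right
  refine h2.congr' ?_
  filter_upwards with s
  simp [div_eq_inv_mul]

lemma prob_tendsto {Ω : Type} [MeasurableSpace Ω] (P : Measure Ω) [IsProbabilityMeasure P]
    (Z W : Ω → ℝ) (hZ : Measurable Z) (hW : Measurable W) (γ : ℝ → ℝ)
    (hγ : Tendsto γ (𝓝[>] 0) (𝓝 0)) :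
    ∀ᵐ v : ℝ, Tendsto (fun t => (P {ω | v ≤ max (Z ω + γ t) 0 + W ω}).toReal) (𝓝[>] (0:ℝ))
      (𝓝 (P {ω | v ≤ max (Z ω) 0 + W ω}).toReal) := by
  set X : Ω → ℝ := fun ω => max (Z ω) 0 + W ω with hX
  have hXm : Measurable X := by fun_prop
  have : IsProbabilityMeasure (P.map X) := Measure.isProbabilityMeasure_map hXm.aemeasurable
  have hcount : {v : ℝ | 0 < (P.map X) {v}}.Countable :=
    Measure.countable_meas_pos_of_disjoint_iUnion (fun v => measurableSet_singleton v)
      (fun a b hab => by simpa using hab)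
  have hnull : volume {v : ℝ | 0 < (P.map X) {v}} = 0 := hcount.measure_zero _
  have hae : ∀ᵐ v : ℝ, v ∉ {v : ℝ | 0 < (P.map X) {v}} := measure_eq_zero_iff_ae_notMem.1 hnull
  filter_upwards [hae] with v hv
  have hv0 : P {ω | X ω = v} = 0 := by
    have h : (P.map X) {v} = 0 := by simpa using hv
    rwa [Measure.map_apply hXm (measurableSet_singleton v)] at h
  have hne : ∀ᵐ ω ∂P, X ω ≠ v := measure_eq_zero_iff_ae_notMem.1 hv0
  have hms : ∀ g : ℝ, MeasurableSet {ω | v ≤ max (Z ω + g) 0 + W ω} := fun g =>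
    measurableSet_le (by fun_prop) (by fun_prop)
  have hms0 : MeasurableSet {ω | v ≤ max (Z ω) 0 + W ω} :=
    measurableSet_le (by fun_prop) (by fun_prop)
  have e1 : ∀ S : Set Ω, MeasurableSet S → (P S).toReal = ∫ ω, S.indicator (fun _ => (1:ℝ)) ω ∂P := by
    intro S hS
    rw [integral_indicator hS]; simp [measureReal_def]
  simp_rw [e1 _ (hms _)]
  rw [e1 _ hms0]
  apply tendsto_integral_filter_of_dominated_convergence (fun _ => (1:ℝ))
  · exact Eventually.of_forall fun t => (measurable_const.indicator (hms _)).aestronglyMeasurable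
  · refine Eventually.of_forall fun t => Eventually.of_forall fun ω => ?_
    refine (norm_indicator_le_norm_self _ _).trans (by simp)
  · exact integrable_const _
  · filter_upwards [hne] with ω hω
    have hc : Tendsto (fun t => max (Z ω + γ t) 0 + W ω) (𝓝[>] 0) (𝓝 (X ω)) := by
      have := ((hγ.const_add (Z ω)).max (tendsto_const_nhds (x := (0:ℝ)))).add_const (W ω)
      simpa [hX] using this
    rcases lt_or_gt_of_ne hω with h | h
    · have h' : ω ∉ {ω | v ≤ max (Z ω) 0 + W ω} := not_le.2 h
      rw [indicator_of_notMem h']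
      refine tendsto_const_nhds.congr' ?_
      filter_upwards [hc.eventually_lt_const h] with t ht
      rw [indicator_of_notMem]
      exact not_le.2 ht
    · have h' : ω ∈ {ω | v ≤ max (Z ω) 0 + W ω} := h.le
      rw [indicator_of_mem h']
      refine tendsto_const_nhds.congr' ?_
      filter_upwards [hc.eventually_const_lt h] with t ht
      rw [indicator_of_mem]
      exact ht.le


/-- Key limit for the positive-exponential part (display (NdTp1)). -/
theorem stmt18
    {Ω : Type} [MeasurableSpace Ω] (P : Measure Ω) [IsProbabilityMeasure P]
    (Y C M G : ℝ) (hY : Y ∈ Set.Ioo (1:ℝ) 2) (hC : 0 < C) (hM : 1 < M) (hG : 0 < G)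
    (U V : Ω → ℝ) (hU : Measurable U) (hV : Measurable V)
    (hIndep : IndepFun U V P)
    (hUchar : ∀ u : ℝ, (∫ ω, Complex.exp (Complex.I * u * (U ω)) ∂P) =
      Complex.exp (((C * Real.Gamma (-Y) * |u| ^ Y : ℝ) : ℂ) *
        (((Real.cos (Real.pi * Y / 2) : ℝ) : ℂ)
          - Complex.I * ((Real.sign u : ℝ) : ℂ) * ((Real.sin (Real.pi * Y / 2) : ℝ) : ℂ))))
    (hVchar : ∀ u : ℝ, (∫ ω, Complex.exp (Complex.I * u * (V ω)) ∂P) =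
      Complex.exp (((C * Real.Gamma (-Y) * |u| ^ Y : ℝ) : ℂ) *
        (((Real.cos (Real.pi * Y / 2) : ℝ) : ℂ)
          - Complex.I * ((Real.sign u : ℝ) : ℂ) * ((Real.sin (Real.pi * Y / 2) : ℝ) : ℂ))))
    (Z Ut : Ω → ℝ)
    (hZ : Z = fun ω => U ω - V ω)
    (hUt : Ut = fun ω => (M - 1) * U ω + (G + 1) * V ω)
    (κ : ℝ → ℝ) (e₁ e₂ : ℝ)
    (hκ : (fun t => κ t - (e₁ * t + e₂ * t ^ (2 - 1/Y))) =o[𝓝[>] (0:ℝ)]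
      fun t => t ^ (2 - 1/Y))
    (γ' : ℝ)
    (hγ' : γ' = -C * Real.Gamma (-Y) * ((M-1) ^ Y + (G+1) ^ Y - M ^ Y - G ^ Y))
    (γt : ℝ → ℝ)
    (hγt : ∀ t, γt t = t ^ (1 - 1/Y) * (γ' - κ t / t)) :
    Filter.Tendsto
      (fun t => ∫ v in Set.Ioi (0:ℝ),
        ((Real.exp (-(t ^ (1/Y) * v)) - 1) / t ^ (1/Y)) *
          ((P {ω | v ≤ max (Z ω + γt t) 0 + Ut ω}).toReal
            - C * (M ^ Y + (G+1) ^ Y) / (Y * v ^ Y)))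
      (𝓝[>] (0:ℝ))
      (𝓝 (-∫ v in Set.Ioi (0:ℝ),
        v * ((P {ω | v ≤ max (Z ω) 0 + Ut ω}).toReal
          - C * M ^ Y / (Y * v ^ Y) - C * (G+1) ^ Y / (Y * v ^ Y)))) := by
  have hY1 := hY.1
  have hY2 := hY.2
  have hY0 : 0 < Y := by linarith
  obtain ⟨hUi, K, hK, hTU⟩ := stable_tail P Y C hY hC U hU (stable_char_pos P Y C U hUchar)
  obtain ⟨hVi, K₁, hK₁, hTV⟩ := stable_tail P Y C hY hC V hV (stable_char_pos P Y C V hVchar)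
  obtain ⟨L, hL, hCU⟩ := stable_crude P Y C hY hC U hU hUchar
  obtain ⟨L₁, hL₁, hCV⟩ := stable_crude P Y C hY hC V hV hVchar
  obtain ⟨A, v0, hA, hv0, hJ⟩ := joint_tail P Y (C / Y) M G hY1 (by positivity) hM hG U V hU hV hUi hVi
    hIndep K K₁ hK hK₁ hTU hTV L L₁ hL hL₁ hCU hCV
  have hγlim : Tendsto γt (𝓝[>] (0:ℝ)) (𝓝 0) := by
    have := gamma_tendsto Y hY1 κ e₁ e₂ γ' hκ
    rwa [show γt = _ from funext hγt]
  have hZm : Measurable Z := by rw [hZ]; fun_prop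
  have hUtm : Measurable Ut := by rw [hUt]; fun_prop
  set D := C * (M ^ Y + (G+1) ^ Y) / Y with hD
  have hM0 : 0 < M := by linarith
  have hD0 : 0 ≤ D := by positivity
  have hterm : ∀ v : ℝ, 0 < v → C * (M ^ Y + (G+1) ^ Y) / (Y * v ^ Y) = D * v ^ (-Y) := by
    intro v hv
    rw [Real.rpow_neg hv.le, hD]; field_simp
  have hJ2 : ∀ γ : ℝ, |γ| ≤ 1 → ∀ v ≥ v0,
      |(P {ω | v ≤ max (Z ω + γ) 0 + Ut ω}).toReal - D * v ^ (-Y)| ≤ A * v ^ (-(Y+1)) := by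
    intro γ hγ v hv
    have := hJ γ hγ v hv
    have e : C * (M ^ Y + (G+1) ^ Y) / Y = C / Y * (M ^ Y + (G+1) ^ Y) := by ring
    rw [hZ, hUt, hD, e]
    exact this
  have hrhs : (-∫ v in Set.Ioi (0:ℝ),
        v * ((P {ω | v ≤ max (Z ω) 0 + Ut ω}).toReal
          - C * M ^ Y / (Y * v ^ Y) - C * (G+1) ^ Y / (Y * v ^ Y))) =
      ∫ v in Set.Ioi (0:ℝ), (-v) * ((P {ω | v ≤ max (Z ω) 0 + Ut ω}).toReal
          - C * (M ^ Y + (G+1) ^ Y) / (Y * v ^ Y)) := by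
    rw [← integral_neg]
    congr 1; ext v
    ring
  rw [hrhs]
  have hsmall : Tendsto (fun t : ℝ => t ^ (1/Y)) (𝓝[>] (0:ℝ)) (𝓝[>] 0) := by
    have hp : 0 < 1/Y := by positivity
    have : Tendsto (fun t : ℝ => t ^ (1/Y)) (𝓝 (0:ℝ)) (𝓝 (0 ^ (1/Y))) :=
      (Real.continuousAt_rpow_const _ _ (Or.inr hp.le)).tendsto
    rw [Real.zero_rpow hp.ne'] at this
    refine tendsto_nhdsWithin_iff.2 ⟨this.mono_left nhdsWithin_le_nhds, ?_⟩
    filter_upwards [self_mem_nhdsWithin] with t ht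
    exact Real.rpow_pos_of_pos ht _
  have hγ1 : ∀ᶠ t in 𝓝[>] (0:ℝ), |γt t| ≤ 1 := by
    have := hγlim.abs
    rw [abs_zero] at this
    filter_upwards [this.eventually_lt_const one_pos] with t ht using ht.le
  set bd : ℝ → ℝ := fun v => if v ≤ v0 then v + D * v ^ (1 - Y) else A * v ^ (-Y) with hbd
  have hbdi : IntegrableOn bd (Ioi 0) := by
    rw [← Ioc_union_Ioi_eq_Ioi hv0.le]
    refine IntegrableOn.union ?_ ?_
    · have i1 : IntegrableOn (fun v : ℝ => v + D * v ^ (1 - Y)) (Ioc 0 v0) := by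
        have a1 : IntervalIntegrable (fun v : ℝ => v ^ (1 - Y)) volume 0 v0 :=
          intervalIntegral.intervalIntegrable_rpow' (by linarith)
        have a2 : IntervalIntegrable (fun v : ℝ => v) volume 0 v0 := continuous_id.intervalIntegrable _ _
        exact (intervalIntegrable_iff_integrableOn_Ioc_of_le hv0.le).1 (a2.add (a1.const_mul D))
      refine i1.congr_fun ?_ measurableSet_Ioc
      intro v hv
      simp [hbd, hv.2]
    · have i1 : IntegrableOn (fun v : ℝ => A * v ^ (-Y)) (Ioi v0) :=
        (integrableOn_Ioi_rpow_of_lt (by linarith) hv0).const_mul A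
      refine i1.congr_fun ?_ measurableSet_Ioi
      intro v hv
      have : ¬ v ≤ v0 := not_le.2 hv
      simp [hbd, this]
  apply tendsto_integral_filter_of_dominated_convergence bd
  · refine Eventually.of_forall fun t => Measurable.aestronglyMeasurable ?_
    have hanti : Antitone (fun v : ℝ => (P {ω | v ≤ max (Z ω + γt t) 0 + Ut ω}).toReal) := by
      intro x y hxy
      exact measureReal_mono (μ := P) (fun ω (h : y ≤ max (Z ω + γt t) 0 + Ut ω) => hxy.trans h)
    have := hanti.measurable
    fun_prop
  · filter_upwards [self_mem_nhdsWithin, hγ1] with t ht hg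
    rw [ae_restrict_iff' measurableSet_Ioi]
    refine Eventually.of_forall fun v hv => ?_
    have hv' : (0:ℝ) < v := hv
    rw [norm_mul, Real.norm_eq_abs, Real.norm_eq_abs, hterm v hv']
    have b1 := exp_quot_bound (t ^ (1/Y)) v (Real.rpow_pos_of_pos ht _) hv'.le
    have hmul : v * v ^ (-Y) = v ^ (1 - Y) := by
      rw [show 1 - Y = -Y + 1 by ring, Real.rpow_add_one hv'.ne']; ring
    by_cases hvv : v ≤ v0
    · simp only [hbd, hvv, if_true]
      have b2 : |(P {ω | v ≤ max (Z ω + γt t) 0 + Ut ω}).toReal - D * v ^ (-Y)| ≤ 1 + D * v ^ (-Y) := by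
        have p0 : 0 ≤ P.real {ω | v ≤ max (Z ω + γt t) 0 + Ut ω} := measureReal_nonneg
        have p1 : P.real {ω | v ≤ max (Z ω + γt t) 0 + Ut ω} ≤ 1 := measureReal_le_one
        rw [measureReal_def] at p0 p1
        have p2 : 0 ≤ D * v ^ (-Y) := by positivity
        rw [abs_le]; constructor <;> linarith
      calc _ ≤ v * (1 + D * v ^ (-Y)) := by gcongr
        _ = _ := by rw [← hmul]; ring
    · simp only [hbd, hvv, if_false]
      have b2 := hJ2 (γt t) hg v (not_le.1 hvv).le
      calc _ ≤ v * (A * v ^ (-(Y+1))) := by gcongr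
        _ = _ := by
          rw [show -(Y+1) = -Y - 1 by ring, Real.rpow_sub_one hv'.ne']; field_simp
  · exact hbdi
  · filter_upwards [ae_restrict_of_ae (prob_tendsto P Z Ut hZm hUtm γt hγlim)] with v hv
    exact ((exp_quot_tendsto v).comp hsmall).mul (hv.sub_const _)
end

section
/- Limit for the negative-exponential part (display (eq:AsyA3)): lim_{t→0⁺} ∫₀^∞ ((e^{t^{1/Y}·v} − 1)/t^{1/Y})·P((Z + γ̃_t)⁺ + Ũ ≤ −v) dv = ∫₀^∞ v·P(Z⁺ + Ũ ≤ −v) dv, and this common value equals (1/2)·E[((Z⁺ + Ũ)⁻)²], where a⁻ := max(−a,0). -/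
open MeasureTheory ProbabilityTheory Filter Topology Asymptotics Set

lemma cpow_form (Y : ℝ) (hY : 1 < Y) (u : ℝ) :
    (-Complex.I * (u:ℂ)) ^ (Y : ℂ) = ((|u| ^ Y : ℝ) : ℂ) *
      (((Real.cos (Real.pi * Y / 2) : ℝ) : ℂ)
          - Complex.I * ((Real.sign u : ℝ) : ℂ) * ((Real.sin (Real.pi * Y / 2) : ℝ) : ℂ)) := by
  have hY0 : (Y : ℂ) ≠ 0 := by
    have : Y ≠ 0 := by linarith
    exact_mod_cast this
  rcases lt_trichotomy u 0 with hu | hu | hu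
  · have hne : (-Complex.I * (u:ℂ)) ≠ 0 := by
      simp [hu.ne]
    rw [Complex.cpow_def_of_ne_zero hne]
    have h1 : (-Complex.I * (u:ℂ)) = ((|u| : ℝ) : ℂ) * Complex.I := by
      rw [abs_of_neg hu]; push_cast; ring
    rw [h1, Complex.log_ofReal_mul (abs_pos.2 hu.ne) Complex.I_ne_zero, Complex.log_I,
      Real.rpow_def_of_pos (abs_pos.2 hu.ne), Real.sign_of_neg hu]
    have h2 : ((Real.log |u| : ℂ) + (Real.pi:ℂ) / 2 * Complex.I) * Y =
      ((Real.log |u| * Y : ℝ) : ℂ) + ((Real.pi * Y / 2 : ℝ) : ℂ) * Complex.I := by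
      push_cast; ring
    rw [h2, Complex.exp_add, Complex.exp_mul_I]
    push_cast; ring
  · subst hu
    have : (0:ℝ) ^ Y = 0 := Real.zero_rpow (by linarith)
    simp [this, hY0]
  · have hne : (-Complex.I * (u:ℂ)) ≠ 0 := by
      simp [hu.ne']
    rw [Complex.cpow_def_of_ne_zero hne]
    have h1 : (-Complex.I * (u:ℂ)) = ((|u| : ℝ) : ℂ) * (-Complex.I) := by
      rw [abs_of_pos hu]; ring
    rw [h1, Complex.log_ofReal_mul (abs_pos.2 hu.ne') (by simp), Complex.log_neg_I,
      Real.rpow_def_of_pos (abs_pos.2 hu.ne'), Real.sign_of_pos hu]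
    have h2 : ((Real.log |u| : ℂ) + -((Real.pi:ℂ) / 2) * Complex.I) * Y =
      ((Real.log |u| * Y : ℝ) : ℂ) + (-((Real.pi * Y / 2 : ℝ) : ℂ)) * Complex.I := by
      push_cast; ring
    rw [h2, Complex.exp_add, Complex.exp_mul_I, Complex.cos_neg, Complex.sin_neg]
    push_cast; ring

lemma shift_strip (f : ℂ → ℂ) (s K c : ℝ) (hs : 0 < s) (hc : 0 < c)
    (hcont : ContinuousOn f {z | 0 ≤ z.im})
    (hdiff : DifferentiableOn ℂ f {z | 0 < z.im})
    (hb : ∀ x y : ℝ, 0 ≤ y → y ≤ s → ‖f (x + y * Complex.I)‖ ≤ K * Real.exp (-c * x ^ 2)) :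
    ∫ x : ℝ, f x = ∫ x : ℝ, f (x + s * Complex.I) := by
  have hint : ∀ y : ℝ, 0 ≤ y → y ≤ s → Integrable (fun x : ℝ => f (x + y * Complex.I)) := by
    intro y h0 h1
    refine ((integrable_exp_neg_mul_sq hc).const_mul K).mono' ?_
      (Eventually.of_forall fun x => hb x y h0 h1)
    refine Continuous.aestronglyMeasurable ?_
    refine hcont.comp_continuous (by fun_prop) ?_
    intro x; simpa using h0
  have i0 := hint 0 le_rfl hs.le
  have is := hint s hs.le le_rfl
  have tn : Tendsto (fun n : ℕ => -(n:ℝ)) atTop atBot :=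
    tendsto_neg_atTop_atBot.comp tendsto_natCast_atTop_atTop
  have tp : Tendsto (fun n : ℕ => (n:ℝ)) atTop atTop := tendsto_natCast_atTop_atTop
  have t0 := intervalIntegral_tendsto_integral i0 tn tp
  have ts := intervalIntegral_tendsto_integral is tn tp
  have tK : Tendsto (fun n : ℕ => K * Real.exp (-c * (n:ℝ) ^ 2) * |s - 0|) atTop (𝓝 0) := by
    have : Tendsto (fun n : ℕ => -c * (n:ℝ) ^ 2) atTop atBot := by
      apply Tendsto.const_mul_atTop_of_neg (by linarith)
      exact (tendsto_pow_atTop (by norm_num)).comp tp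
    have := (Real.tendsto_exp_atBot.comp this).const_mul K
    have := this.mul_const |s - 0|
    simpa using this
  have tR : Tendsto (fun n : ℕ => Complex.I • ∫ y in (0:ℝ)..s, f (((n:ℝ):ℂ) + y * Complex.I))
      atTop (𝓝 0) := by
    refine squeeze_zero_norm (fun n => ?_) tK
    rw [norm_smul, Complex.norm_I, one_mul]
    refine intervalIntegral.norm_integral_le_of_norm_le_const fun y hy => ?_
    rw [uIoc_of_le hs.le] at hy
    exact hb n y hy.1.le hy.2
  have tL : Tendsto (fun n : ℕ => Complex.I • ∫ y in (0:ℝ)..s, f (((-(n:ℝ) : ℝ):ℂ) + y * Complex.I))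
      atTop (𝓝 0) := by
    refine squeeze_zero_norm (fun n => ?_) tK
    rw [norm_smul, Complex.norm_I, one_mul]
    refine intervalIntegral.norm_integral_le_of_norm_le_const fun y hy => ?_
    rw [uIoc_of_le hs.le] at hy
    have := hb (-n) y hy.1.le hy.2
    simpa using this
  have key : ∀ n : ℕ, (((∫ x in (-(n:ℝ))..n, f (x + (0:ℝ) * Complex.I))
      - ∫ x in (-(n:ℝ))..n, f (x + s * Complex.I))
      + Complex.I • ∫ y in (0:ℝ)..s, f (((n:ℝ):ℂ) + y * Complex.I))
      - Complex.I • (∫ y in (0:ℝ)..s, f (((-(n:ℝ) : ℝ):ℂ) + y * Complex.I)) = 0 := by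
    intro n
    have := Complex.integral_boundary_rect_eq_zero_of_continuousOn_of_differentiableOn f
      ⟨-(n:ℝ), 0⟩ ⟨n, s⟩ ?_ ?_
    · simpa using this
    · refine hcont.mono fun z hz => ?_
      have := hz.2
      simp only [uIcc_of_le hs.le, mem_preimage, mem_Icc] at this
      exact this.1
    · refine hdiff.mono fun z hz => ?_
      have := hz.2
      simp only [min_eq_left hs.le, mem_preimage, mem_Ioo] at this
      exact this.1
  have T := ((t0.sub ts).add tR).sub tL
  have := tendsto_nhds_unique T (tendsto_const_nhds.congr fun n => (key n).symm)
  simp only [add_zero, sub_zero] at this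
  have := sub_eq_zero.1 this
  simpa using this

lemma pow_bd (Y : ℝ) (h1 : 1 < Y) (h2 : Y < 2) (r : ℝ) (hr : 0 ≤ r) : r ^ Y ≤ 1 + r ^ 2 := by
  rcases le_total r 1 with h | h
  · have := Real.rpow_le_one hr h (by linarith : 0 ≤ Y)
    nlinarith [sq_nonneg r]
  · have := Real.rpow_le_rpow_of_exponent_le h h2.le
    rw [Real.rpow_two] at this
    linarith

lemma H_bd (A Y s b : ℝ) (h1 : 1 < Y) (h2 : Y < 2) (x y : ℝ) (hy : 0 ≤ y) (hys : y ≤ s) :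
    ‖Complex.exp ((A:ℂ) * (-Complex.I * ((x:ℂ) + y * Complex.I)) ^ (Y:ℂ)) *
      Complex.exp (-(b:ℂ) * (((x:ℂ) + y * Complex.I) - s * Complex.I) ^ 2)‖
    ≤ Real.exp (|A| * (1 + s ^ 2) + b * (y - s) ^ 2) * Real.exp (-(b - |A|) * x ^ 2) := by
  rw [norm_mul, Complex.norm_exp, Complex.norm_exp, ← Real.exp_add, ← Real.exp_add, Real.exp_le_exp]
  have e1 : ((A:ℂ) * (-Complex.I * ((x:ℂ) + y * Complex.I)) ^ (Y:ℂ)).re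
      ≤ |A| * (1 + (x ^ 2 + y ^ 2)) := by
    refine (Complex.re_le_norm _).trans ?_
    rw [norm_mul, Complex.norm_cpow_real, Complex.norm_real, Real.norm_eq_abs]
    refine mul_le_mul_of_nonneg_left ((pow_bd Y h1 h2 _ (norm_nonneg _)).trans ?_) (abs_nonneg _)
    rw [norm_mul, norm_neg, Complex.norm_I, one_mul, Complex.sq_norm, Complex.normSq_add_mul_I]
  have e2 : (-(b:ℂ) * (((x:ℂ) + y * Complex.I) - s * Complex.I) ^ 2).re
      = -b * (x ^ 2 - (y - s) ^ 2) := by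
    simp [pow_two]
  rw [e2]
  have : |A| * y ^ 2 ≤ |A| * s ^ 2 :=
    mul_le_mul_of_nonneg_left (pow_le_pow_left₀ hy hys 2) (abs_nonneg _)
  linarith

lemma inner_gauss (b s x : ℝ) (hb : 0 < b) :
    ∫ u : ℝ, Complex.exp (Complex.I * u * x) * Complex.exp (-(b:ℂ) * ((u:ℂ) - s * Complex.I) ^ 2)
      = ((Real.sqrt (Real.pi / b) * Real.exp (-s * x - x ^ 2 / (4 * b)) : ℝ) : ℂ) := by
  have h := fourierIntegral_gaussian (b := (b:ℂ)) (by simpa using hb) ((x:ℂ) + 2 * b * s)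
  have hbc : (b:ℂ) ≠ 0 := by exact_mod_cast hb.ne'
  have e : ∀ u : ℝ, Complex.exp (Complex.I * u * x) *
      Complex.exp (-(b:ℂ) * ((u:ℂ) - s * Complex.I) ^ 2) =
      Complex.exp (b * s ^ 2) * (Complex.exp (Complex.I * ((x:ℂ) + 2 * b * s) * u) *
        Complex.exp (-(b:ℂ) * u ^ 2)) := by
    intro u
    rw [← Complex.exp_add, ← Complex.exp_add, ← Complex.exp_add]
    congr 1
    linear_combination (-(b:ℂ) * s ^ 2) * Complex.I_sq
  simp_rw [e]
  rw [integral_const_mul, h]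
  have r : ((Real.pi:ℂ) / b) ^ (1/2 : ℂ) = ((Real.sqrt (Real.pi / b) : ℝ) : ℂ) := by
    rw [Real.sqrt_eq_rpow, Complex.ofReal_cpow (by positivity)]
    push_cast; rfl
  rw [r, mul_left_comm, ← Complex.exp_add]
  push_cast
  congr 2
  field_simp
  ring

lemma laplace_fin {Ω : Type} [MeasurableSpace Ω] (P : Measure Ω) [IsProbabilityMeasure P]
    (A Y : ℝ) (h1 : 1 < Y) (h2 : Y < 2) (U : Ω → ℝ) (hU : Measurable U)
    (hchar : ∀ u : ℝ, (∫ ω, Complex.exp (Complex.I * u * (U ω)) ∂P) =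
      Complex.exp ((A:ℂ) * (-Complex.I * (u:ℂ)) ^ (Y : ℂ))) (s : ℝ) (hs : 0 < s) :
    Integrable (fun ω => Real.exp (-s * U ω)) P := by
  set K := Real.exp (|A| * (1 + s ^ 2)) with hK
  have main : ∀ b : ℝ, 2 * |A| + 1 ≤ b →
      ∫ ω, Real.exp (-s * U ω - U ω ^ 2 / (4 * b)) ∂P ≤ 2 * K := by
    intro b hb
    have hA := abs_nonneg A
    have hb0 : 0 < b := by linarith
    have hbA : 0 < b - |A| := by linarith
    let H : ℂ → ℂ := fun z => Complex.exp ((A:ℂ) * (-Complex.I * z) ^ (Y:ℂ)) *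
      Complex.exp (-(b:ℂ) * (z - s * Complex.I) ^ 2)
    have hsh : ∫ x : ℝ, H x = ∫ x : ℝ, H (x + s * Complex.I) := by
      refine shift_strip H s (Real.exp (|A| * (1 + s ^ 2) + b * s ^ 2)) (b - |A|) hs hbA ?_ ?_ ?_
      · intro z hz
        refine ContinuousAt.continuousWithinAt ?_
        have hc : ContinuousAt (fun z : ℂ => (-Complex.I * z) ^ (Y:ℂ)) z := by
          refine ContinuousAt.comp (g := fun z : ℂ => z ^ (Y:ℂ)) (f := fun z => -Complex.I * z) ?_ (by fun_prop)
          refine Complex.continuousAt_cpow_const_of_re_pos (Or.inl ?_) ?_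
          · simpa using hz
          · simp; linarith
        have : Continuous (fun z : ℂ => Complex.exp (-(b:ℂ) * (z - s * Complex.I) ^ 2)) := by fun_prop
        exact (Complex.continuous_exp.continuousAt.comp (continuousAt_const.mul hc)).mul this.continuousAt
      · intro z hz
        refine DifferentiableAt.differentiableWithinAt ?_
        have hc : DifferentiableAt ℂ (fun z : ℂ => (-Complex.I * z) ^ (Y:ℂ)) z := by
          refine DifferentiableAt.cpow_const (by fun_prop) ?_
          left; simpa using hz
        exact ((hc.const_mul _).cexp).mul (by fun_prop)
      · intro x y hy hys
        refine (H_bd A Y s b h1 h2 x y hy hys).trans ?_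
        refine mul_le_mul_of_nonneg_right (Real.exp_le_exp.2 ?_) (Real.exp_pos _).le
        have : (y - s) ^ 2 ≤ s ^ 2 := by nlinarith
        have := mul_le_mul_of_nonneg_left this hb0.le
        linarith
    have hub : ‖∫ x : ℝ, H (x + s * Complex.I)‖ ≤ K * Real.sqrt (Real.pi / (b - |A|)) := by
      rw [← integral_gaussian, ← integral_const_mul]
      refine norm_integral_le_of_norm_le ((integrable_exp_neg_mul_sq hbA).const_mul K) ?_
      refine Eventually.of_forall fun x => ?_
      have hh := H_bd A Y s b h1 h2 x s hs.le le_rfl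
      have e : |A| * (1 + s ^ 2) + b * (s - s) ^ 2 = |A| * (1 + s ^ 2) := by ring
      rw [e] at hh
      exact hh
    have hfub : ∫ x : ℝ, H x =
        ((Real.sqrt (Real.pi / b) * ∫ ω, Real.exp (-s * U ω - U ω ^ 2 / (4 * b)) ∂P : ℝ) : ℂ) := by
      have e1 : ∀ x : ℝ, H x = ∫ ω, Complex.exp (Complex.I * x * U ω) *
          Complex.exp (-(b:ℂ) * ((x:ℂ) - s * Complex.I) ^ 2) ∂P := by
        intro x
        rw [integral_mul_const, hchar x]
      simp_rw [e1]
      rw [integral_integral_swap]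
      · simp_rw [inner_gauss b s _ hb0]
        rw [integral_complex_ofReal, integral_const_mul]
      · have hg : Integrable (fun p : ℝ × Ω => (Real.exp (b * s ^ 2) * Real.exp (-b * p.1 ^ 2)) * (1:ℝ))
            (volume.prod P) :=
          Integrable.mul_prod ((integrable_exp_neg_mul_sq hb0).const_mul _) (integrable_const (1:ℝ))
        refine hg.mono' ?_ (Eventually.of_forall fun p => ?_)
        · refine Measurable.aestronglyMeasurable ?_
          unfold Function.uncurry
          fun_prop
        · simp only [Function.uncurry, norm_mul, Complex.norm_exp, mul_one]
          rw [← Real.exp_add, ← Real.exp_add, Real.exp_le_exp]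
          apply le_of_eq
          simp [pow_two]
          ring
    rw [← hsh, hfub, Complex.norm_real, Real.norm_eq_abs] at hub
    have h3 := (le_abs_self _).trans hub
    have h4 : Real.sqrt (Real.pi / (b - |A|)) ≤ 2 * Real.sqrt (Real.pi / b) := by
      have : Real.sqrt (4 * (Real.pi / b)) = 2 * Real.sqrt (Real.pi / b) := by
        rw [Real.sqrt_mul (by norm_num)]
        congr 1
        rw [show (4:ℝ) = 2 ^ 2 by norm_num]; exact Real.sqrt_sq (by norm_num)
      rw [← this]
      apply Real.sqrt_le_sqrt
      rw [← mul_div_assoc, div_le_div_iff₀ hbA hb0]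
      nlinarith [Real.pi_pos]
    have hp : 0 < Real.sqrt (Real.pi / b) := by have := Real.pi_pos; positivity
    have h5 := h3.trans (mul_le_mul_of_nonneg_left h4 (Real.exp_pos _).le)
    have h6 : Real.sqrt (Real.pi / b) * ∫ ω, Real.exp (-s * U ω - U ω ^ 2 / (4 * b)) ∂P
      ≤ Real.sqrt (Real.pi / b) * (2 * K) := by linarith
    exact le_of_mul_le_mul_left h6 hp
  -- Fatou
  have hm : ∀ n : ℕ, Measurable (fun ω => Real.exp (-s * U ω - U ω ^ 2 / (4 * (2 * |A| + 1 + n)))) := by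
    intro n; fun_prop
  have hint : ∀ n : ℕ, Integrable (fun ω => Real.exp (-s * U ω - U ω ^ 2 / (4 * (2 * |A| + 1 + n)))) P := by
    intro n
    set b : ℝ := 2 * |A| + 1 + n with hbdef
    have hb0 : 0 < b := by positivity
    refine (integrable_const (Real.exp (b * s ^ 2))).mono' (hm n).aestronglyMeasurable
      (Eventually.of_forall fun ω => ?_)
    rw [Real.norm_eq_abs, abs_of_pos (Real.exp_pos _), Real.exp_le_exp]
    have : b * s ^ 2 - (-s * U ω - U ω ^ 2 / (4 * b)) = (U ω + 2 * b * s) ^ 2 / (4 * b) := by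
      field_simp; ring
    have h' : 0 ≤ (U ω + 2 * b * s) ^ 2 / (4 * b) := by positivity
    linarith
  have fat := lintegral_liminf_le (μ := P) (u := atTop)
    (f := fun (n : ℕ) ω => ENNReal.ofReal (Real.exp (-s * U ω - U ω ^ 2 / (4 * (2 * |A| + 1 + n)))))
    (fun n => (hm n).ennreal_ofReal)
  have lim : ∀ ω, liminf (fun n : ℕ => ENNReal.ofReal
      (Real.exp (-s * U ω - U ω ^ 2 / (4 * (2 * |A| + 1 + n))))) atTop
      = ENNReal.ofReal (Real.exp (-s * U ω)) := by
    intro ω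
    refine Tendsto.liminf_eq (ENNReal.tendsto_ofReal ?_)
    refine (Real.continuous_exp.tendsto _).comp ?_
    have : Tendsto (fun n : ℕ => 4 * (2 * |A| + 1 + (n:ℝ))) atTop atTop :=
      (tendsto_atTop_add_const_left _ _ tendsto_natCast_atTop_atTop).const_mul_atTop (by norm_num)
    have := (this.const_div_atTop (U ω ^ 2)).const_sub (-s * U ω)
    simpa using this
  simp_rw [lim] at fat
  have bd : liminf (fun n : ℕ => ∫⁻ ω, ENNReal.ofReal
      (Real.exp (-s * U ω - U ω ^ 2 / (4 * (2 * |A| + 1 + n)))) ∂P) atTop ≤ ENNReal.ofReal (2 * K) := by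
    refine (liminf_le_liminf (Eventually.of_forall fun n => ?_)).trans
      (le_of_eq (liminf_const (f := (atTop : Filter ℕ)) (ENNReal.ofReal (2 * K))))
    show _ ≤ ENNReal.ofReal (2 * K)
    rw [← ofReal_integral_eq_lintegral_ofReal (hint n) (Eventually.of_forall fun _ => (Real.exp_pos _).le)]
    refine ENNReal.ofReal_le_ofReal (main _ ?_)
    have : (0:ℝ) ≤ n := n.cast_nonneg
    linarith
  refine ⟨(by fun_prop : Measurable (fun ω => Real.exp (-s * U ω))).aestronglyMeasurable, ?_⟩
  rw [hasFiniteIntegral_iff_ofReal (Eventually.of_forall fun _ => (Real.exp_pos _).le)]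
  exact (fat.trans bd).trans_lt ENNReal.ofReal_lt_top

/-- Limit for the negative-exponential part (display (eq:AsyA3)), together with the
identification of the limit as `(1/2)·E[((Z⁺ + Ũ)⁻)²]`. -/
theorem stmt19
    {Ω : Type} [MeasurableSpace Ω] (P : Measure Ω) [IsProbabilityMeasure P]
    (Y C M G : ℝ) (hY : Y ∈ Set.Ioo (1:ℝ) 2) (hC : 0 < C) (hM : 1 < M) (hG : 0 < G)
    (U V : Ω → ℝ) (hU : Measurable U) (hV : Measurable V)
    (hIndep : IndepFun U V P)
    (hUchar : ∀ u : ℝ, (∫ ω, Complex.exp (Complex.I * u * (U ω)) ∂P) =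
      Complex.exp (((C * Real.Gamma (-Y) * |u| ^ Y : ℝ) : ℂ) *
        (((Real.cos (Real.pi * Y / 2) : ℝ) : ℂ)
          - Complex.I * ((Real.sign u : ℝ) : ℂ) * ((Real.sin (Real.pi * Y / 2) : ℝ) : ℂ))))
    (hVchar : ∀ u : ℝ, (∫ ω, Complex.exp (Complex.I * u * (V ω)) ∂P) =
      Complex.exp (((C * Real.Gamma (-Y) * |u| ^ Y : ℝ) : ℂ) *
        (((Real.cos (Real.pi * Y / 2) : ℝ) : ℂ)
          - Complex.I * ((Real.sign u : ℝ) : ℂ) * ((Real.sin (Real.pi * Y / 2) : ℝ) : ℂ))))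
    (Z Ut : Ω → ℝ)
    (hZ : Z = fun ω => U ω - V ω)
    (hUt : Ut = fun ω => (M - 1) * U ω + (G + 1) * V ω)
    (κ : ℝ → ℝ) (e₁ e₂ : ℝ)
    (hκ : (fun t => κ t - (e₁ * t + e₂ * t ^ (2 - 1/Y))) =o[𝓝[>] (0:ℝ)]
      fun t => t ^ (2 - 1/Y))
    (γ' : ℝ)
    (hγ' : γ' = -C * Real.Gamma (-Y) * ((M-1) ^ Y + (G+1) ^ Y - M ^ Y - G ^ Y))
    (γt : ℝ → ℝ)
    (hγt : ∀ t, γt t = t ^ (1 - 1/Y) * (γ' - κ t / t)) :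
    Filter.Tendsto
      (fun t => ∫ v in Set.Ioi (0:ℝ),
        ((Real.exp (t ^ (1/Y) * v) - 1) / t ^ (1/Y)) *
          (P {ω | max (Z ω + γt t) 0 + Ut ω ≤ -v}).toReal)
      (𝓝[>] (0:ℝ))
      (𝓝 (∫ v in Set.Ioi (0:ℝ), v * (P {ω | max (Z ω) 0 + Ut ω ≤ -v}).toReal)) ∧
    (∫ v in Set.Ioi (0:ℝ), v * (P {ω | max (Z ω) 0 + Ut ω ≤ -v}).toReal)
      = (1/2) * ∫ ω, (max (-(max (Z ω) 0 + Ut ω)) 0) ^ 2 ∂P := by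
  obtain ⟨hY1, hY2⟩ := hY
  have cU : ∀ u : ℝ, (∫ ω, Complex.exp (Complex.I * u * (U ω)) ∂P) =
      Complex.exp (((C * Real.Gamma (-Y) : ℝ):ℂ) * (-Complex.I * (u:ℂ)) ^ (Y : ℂ)) := by
    intro u
    rw [hUchar u, cpow_form Y hY1 u]
    push_cast; ring_nf
  have cV : ∀ u : ℝ, (∫ ω, Complex.exp (Complex.I * u * (V ω)) ∂P) =
      Complex.exp (((C * Real.Gamma (-Y) : ℝ):ℂ) * (-Complex.I * (u:ℂ)) ^ (Y : ℂ)) := by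
    intro u
    rw [hVchar u, cpow_form Y hY1 u]
    push_cast; ring_nf
  have iU := laplace_fin P _ Y hY1 hY2 U hU cU (3 * (M - 1)) (by linarith)
  have iV := laplace_fin P _ Y hY1 hY2 V hV cV (3 * (G + 1)) (by linarith)
  have mZ : Measurable Z := by rw [hZ]; fun_prop
  have mUt : Measurable Ut := by rw [hUt]; fun_prop
  have iUt : Integrable (fun ω => Real.exp (-3 * Ut ω)) P := by
    have hi : IndepFun (fun ω => Real.exp (-(3 * (M - 1)) * U ω))
        (fun ω => Real.exp (-(3 * (G + 1)) * V ω)) P :=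
      hIndep.comp (φ := fun x => Real.exp (-(3 * (M - 1)) * x))
        (ψ := fun x => Real.exp (-(3 * (G + 1)) * x)) (by fun_prop) (by fun_prop)
    have := hi.integrable_mul iU iV
    refine this.congr (Eventually.of_forall fun ω => ?_)
    simp only [Pi.mul_apply, hUt]
    rw [← Real.exp_add]
    congr 1; ring
  set K := ∫ ω, Real.exp (-3 * Ut ω) ∂P with hK
  have hK0 : 0 ≤ K := integral_nonneg fun _ => (Real.exp_pos _).le
  -- tail bound
  have tail : ∀ g v : ℝ, (P {ω | max (Z ω + g) 0 + Ut ω ≤ -v}).toReal ≤ K * Real.exp (-3 * v) := by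
    intro g v
    have h := mul_meas_ge_le_integral_of_nonneg (μ := P)
      (Eventually.of_forall fun ω => (Real.exp_pos (-3 * Ut ω)).le) iUt (Real.exp (3 * v))
    have hsub : P.real {ω | max (Z ω + g) 0 + Ut ω ≤ -v} ≤
        P.real {ω | Real.exp (3 * v) ≤ Real.exp (-3 * Ut ω)} := by
      refine measureReal_mono (fun ω hω => ?_) (measure_ne_top _ _)
      simp only [mem_setOf_eq] at hω ⊢
      rw [Real.exp_le_exp]
      have := le_max_right (Z ω + g) 0
      linarith
    have h2 : Real.exp (3 * v) * P.real {ω | max (Z ω + g) 0 + Ut ω ≤ -v} ≤ K :=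
      (mul_le_mul_of_nonneg_left hsub (Real.exp_pos _).le).trans h
    have h3 : Real.exp (-3 * v) * Real.exp (3 * v) = 1 := by
      rw [← Real.exp_add, ← Real.exp_zero]; congr 1; ring
    have h4 := mul_le_mul_of_nonneg_left h2 (Real.exp_pos (-3 * v)).le
    rw [← mul_assoc, h3, one_mul] at h4
    have : (P {ω | max (Z ω + g) 0 + Ut ω ≤ -v}).toReal
      = P.real {ω | max (Z ω + g) 0 + Ut ω ≤ -v} := rfl
    linarith
  -- gamma tends to zero
  have hY0 : 0 < Y := by linarith
  have hq : 0 < 1 - 1 / Y := by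
    have : 1 / Y < 1 := by rw [div_lt_one hY0]; exact hY1
    linarith
  have tid : Tendsto (fun t : ℝ => t) (𝓝[>] (0:ℝ)) (𝓝 0) := nhdsWithin_le_nhds
  have tpow : ∀ q : ℝ, 0 < q → Tendsto (fun t : ℝ => t ^ q) (𝓝[>] (0:ℝ)) (𝓝 0) := by
    intro q hq
    have := (Real.continuousAt_rpow_const (0:ℝ) q (Or.inr hq.le)).tendsto
    rw [Real.zero_rpow hq.ne'] at this
    exact this.mono_left nhdsWithin_le_nhds
  have tγ : Tendsto γt (𝓝[>] (0:ℝ)) (𝓝 0) := by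
    have hk : Tendsto (fun t => (κ t - (e₁ * t + e₂ * t ^ (2 - 1/Y))) / t ^ (2 - 1/Y))
        (𝓝[>] (0:ℝ)) (𝓝 0) := hκ.tendsto_div_nhds_zero
    have h1 := (tpow _ hq).mul (((hk.add_const e₂).mul (tpow _ hq)).add_const e₁ |>.const_sub γ')
    simp only [zero_mul] at h1
    refine h1.congr' ?_
    filter_upwards [self_mem_nhdsWithin] with t ht
    have ht0 : (0:ℝ) < t := ht
    rw [hγt]
    congr 2
    have hp : t ^ (2 - 1/Y) = t ^ (1 - 1/Y) * t := by
      rw [show 2 - 1/Y = (1 - 1/Y) + 1 by ring, Real.rpow_add ht0, Real.rpow_one]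
    have hp0 : 0 < t ^ (1 - 1/Y) := Real.rpow_pos_of_pos ht0 _
    rw [hp]
    field_simp
    ring
  have ta := tpow (1 / Y) (by positivity)
  refine ⟨?_, ?_⟩
  · refine tendsto_integral_filter_of_dominated_convergence (fun v => K * Real.exp (-v)) ?_ ?_ ?_ ?_
    · refine Eventually.of_forall fun t => ?_
      have ha : Antitone (fun v : ℝ => (P {ω | max (Z ω + γt t) 0 + Ut ω ≤ -v}).toReal) := by
        intro v w hvw
        refine ENNReal.toReal_mono (measure_ne_top _ _) (measure_mono fun ω hω => ?_)
        simp only [mem_setOf_eq] at hω ⊢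
        linarith
      have := ha.measurable
      exact Measurable.aestronglyMeasurable (by fun_prop)
    · have ev : ∀ᶠ t in 𝓝[>] (0:ℝ), t ^ (1 / Y) < 1 := ta.eventually_lt_const one_pos
      filter_upwards [ev, self_mem_nhdsWithin] with t ht1 ht
      have ht0 : (0:ℝ) < t := ht
      have ha : 0 < t ^ (1 / Y) := Real.rpow_pos_of_pos ht0 _
      rw [ae_restrict_iff' measurableSet_Ioi]
      refine Eventually.of_forall fun v hv => ?_
      have hv0 : 0 < v := hv
      set a := t ^ (1 / Y)
      have h0 : 0 ≤ (Real.exp (a * v) - 1) / a := by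
        apply div_nonneg _ ha.le
        have := Real.add_one_le_exp (a * v)
        nlinarith
      have h1 : (Real.exp (a * v) - 1) / a ≤ Real.exp (2 * v) := by
        have e1 : Real.exp (a * v) - 1 ≤ a * v * Real.exp (a * v) := by
          have := Real.add_one_le_exp (-(a * v))
          have hm := mul_le_mul_of_nonneg_right this (Real.exp_pos (a * v)).le
          rw [← Real.exp_add, neg_add_cancel, Real.exp_zero] at hm
          linarith
        rw [div_le_iff₀ ha]
        have e2 : Real.exp (a * v) ≤ Real.exp v := by
          rw [Real.exp_le_exp]; nlinarith
        have e3 : v ≤ Real.exp v := by linarith [Real.add_one_le_exp v]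
        have e4 : Real.exp (2 * v) = Real.exp v * Real.exp v := by
          rw [← Real.exp_add]; congr 1; ring
        have e5 : v * Real.exp (a * v) ≤ Real.exp v * Real.exp v :=
          mul_le_mul e3 e2 (Real.exp_pos _).le (Real.exp_pos _).le
        rw [e4]
        have := mul_le_mul_of_nonneg_left e5 ha.le
        linarith
      rw [Real.norm_eq_abs, abs_of_nonneg (mul_nonneg h0 ENNReal.toReal_nonneg)]
      refine (mul_le_mul h1 (tail (γt t) v) ENNReal.toReal_nonneg (Real.exp_pos _).le).trans
        (le_of_eq ?_)
      rw [mul_left_comm, ← Real.exp_add]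
      congr 2; ring
    · exact (integrableOn_exp_neg_Ioi 0).const_mul K
    · have mW : Measurable (fun ω => max (Z ω) 0 + Ut ω) := by fun_prop
      have hcount := Measure.countable_meas_level_set_pos (μ := P) (g := fun ω => -(max (Z ω) 0 + Ut ω))
        mW.neg
      have hae : ∀ᵐ v ∂(volume.restrict (Ioi (0:ℝ))), v ∉ {t | 0 < P {a | -(max (Z a) 0 + Ut a) = t}} :=
        ae_restrict_of_ae (hcount.ae_notMem volume)
      filter_upwards [hae] with v hv
      have hP0 : P {a | -(max (Z a) 0 + Ut a) = v} = 0 := by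
        simpa using hv
      refine Tendsto.mul ?_ ?_
      · have hd : HasDerivAt (fun a : ℝ => Real.exp (a * v)) v 0 := by
          have := ((hasDerivAt_id (0:ℝ)).mul_const v).exp
          simpa using this
        have hs := hd.tendsto_slope_zero
        have ta' : Tendsto (fun t : ℝ => t ^ (1 / Y)) (𝓝[>] (0:ℝ)) (𝓝[≠] 0) := by
          refine tendsto_nhdsWithin_iff.2 ⟨ta, ?_⟩
          filter_upwards [self_mem_nhdsWithin] with t ht
          exact (Real.rpow_pos_of_pos ht _).ne'
        refine (hs.comp ta').congr fun t => ?_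
        simp [div_eq_inv_mul]
      · refine (ENNReal.tendsto_toReal (measure_ne_top _ _)).comp ?_
        refine tendsto_measure_of_ae_tendsto_indicator_of_isFiniteMeasure _ ?_ ?_ ?_
        · exact measurableSet_le mW measurable_const
        · intro t
          exact measurableSet_le (by fun_prop) measurable_const
        · have : ∀ᵐ ω ∂P, ¬ (-(max (Z ω) 0 + Ut ω) = v) := by
            rw [ae_iff]; simpa using hP0
          filter_upwards [this] with ω hω
          have tW : Tendsto (fun t => max (Z ω + γt t) 0 + Ut ω) (𝓝[>] (0:ℝ))
              (𝓝 (max (Z ω) 0 + Ut ω)) := by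
            have h := ((tγ.const_add (Z ω)).max (tendsto_const_nhds (x := (0:ℝ)))).add_const (Ut ω)
            simpa using h
          have hne : max (Z ω) 0 + Ut ω ≠ -v := fun h => hω (by rw [h, neg_neg])
          rcases lt_or_gt_of_ne hne with hlt | hgt
          · filter_upwards [tW.eventually_lt_const hlt] with t ht
            exact ⟨fun _ => hlt.le, fun _ => ht.le⟩
          · filter_upwards [tW.eventually_const_lt hgt] with t ht
            exact ⟨fun h => absurd h (not_le.2 ht), fun h => absurd h (not_le.2 hgt)⟩
  · have mf : Measurable (fun ω => max (-(max (Z ω) 0 + Ut ω)) 0) := by fun_prop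
    have L := lintegral_rpow_eq_lintegral_meas_le_mul P
      (f := fun ω => max (-(max (Z ω) 0 + Ut ω)) 0)
      (Eventually.of_forall fun ω => le_max_right _ _) mf.aemeasurable (p := 2) (by norm_num)
    have ha : Antitone (fun v : ℝ => (P {ω | max (Z ω) 0 + Ut ω ≤ -v}).toReal) := by
      intro v w hvw
      refine ENNReal.toReal_mono (measure_ne_top _ _) (measure_mono fun ω hω => ?_)
      simp only [mem_setOf_eq] at hω ⊢
      linarith
    have mP := ha.measurable
    rw [integral_eq_lintegral_of_nonneg_ae, integral_eq_lintegral_of_nonneg_ae]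
    · simp only [Real.rpow_two] at L
      rw [L, ENNReal.toReal_mul, ENNReal.toReal_ofReal (by norm_num), ← mul_assoc]
      rw [show (1/2:ℝ) * 2 = 1 by norm_num, one_mul]
      congr 1
      refine setLIntegral_congr_fun measurableSet_Ioi fun v hv => ?_
      have hv0 : 0 < v := hv
      have hset : {ω | v ≤ max (-(max (Z ω) 0 + Ut ω)) 0} = {ω | max (Z ω) 0 + Ut ω ≤ -v} := by
        ext ω
        simp only [mem_setOf_eq, le_max_iff]
        constructor
        · rintro (h | h) <;> linarith
        · intro h; left; linarith
      simp only [hset]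
      rw [ENNReal.ofReal_mul hv0.le, ENNReal.ofReal_toReal (measure_ne_top _ _), mul_comm]
      norm_num
    · exact Eventually.of_forall fun ω => sq_nonneg _
    · exact (mf.pow_const 2).aestronglyMeasurable
    · rw [EventuallyLE, ae_restrict_iff' measurableSet_Ioi]
      exact Eventually.of_forall fun v hv => mul_nonneg (le_of_lt hv) ENNReal.toReal_nonneg
    · exact (measurable_id.mul mP).aestronglyMeasurable
end
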